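/- arXiv:2103.07192 — 2 statements merged into one kernel-verified Lean document; each statement's English description precedes it below -/
import Mathlib

section
/- Let k ≥ 3 and b ≥ 1 be fixed integers. Then uniformly for X ≥ 1, c ∈ ℝ and any Lebesgue-measurable set A ⊆ [c, c+1], one has ∫_{[0,1]^{k−2} × A} |g_k(α, θ; X)|^{2b} dα dθ ≪_{b,k} (log(4X))^{2b} · (sup_{θ ∈ A} ψ_k*(θ; X)) · J_{b,k}(4X + 1). -/
/-!
Write `k = d + 2`, `H = ⌊X⌋` and `N = ⌊4X + 1⌋`. The proof averages over translations of the
variable, which exploits that the phase of `g_k` has no term of degree `k - 1`.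

For `1 ≤ y ≤ H` put `h = y + H`. As `x` runs over `[1, N]`, the integers `x - h` cover `[-H, H]`, and
they are detected by the additive characters modulo `N` (`sum_shift_eq`): `g_k` is a combination, with
coefficients given by values of the Dirichlet kernel, of the sums over `1 ≤ x ≤ N` of the terms of
`g_k` at `x - h`, twisted by `e(j(x - h)/N)`. The coefficients have total size at most `7 log(4X)`
(`sum_norm_dirichlet_le`), so Hölder's inequality costs the factor `(log 4X)^{2b}`.

Expanding `(x - h)^i`, the translation changes the coefficients of degrees `1, …, d` by a unimodular
integral affine map, which preserves the integral over the torus in `α`, and it creates the coefficient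
`-kθh` in degree `k - 1` (`integral_shift`). The twist affects degree `1` only and disappears in the
same way. Hence for every `h` the mean value of `|g_k|^{2b}` over `α` is bounded through the mean value
of `T(-kθh)`, where `T(s)` is the `2b`-th power of the modulus of the sum over `[1, N]` with
coefficient `s` in degree `k - 1`.

The function `T` is a nonnegative trigonometric polynomial of degree at most `2bN^{k-1} ≪ X^{k-1}`, so
it is reproduced by a Dirichlet kernel, which is `≪ min(X^{k-1}, 1/‖·‖)`. Averaging `T(-kθ(y + H))`
over `y` therefore gives `≪ ψ_k^*(θ; X) ∫ T` (`sum_fullSum_le`). Finally one integrates over `θ ∈ A`,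
bounds `ψ_k^*` by its supremum and extends the nonnegative integrand to the whole period `[c, c + 1]`;
the integral over all `k` coefficients is `J_{b,k}(4X + 1)` (`J_eq`).
-/

open MeasureTheory Finset

noncomputable def e (θ : ℝ) : ℂ := Complex.exp (2 * Real.pi * Complex.I * θ)

/-- Distance to the nearest integer. -/
noncomputable def nint (t : ℝ) : ℝ := |t - round t|

/-- `ψ_k(θ, μ; X) = (1/X) ∑_{1 ≤ y ≤ X} min(X^{k-1}, 1/‖kθy + μ‖)`, where the
minimum is interpreted as `X^{k-1}` when `‖kθy + μ‖ = 0`. -/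
noncomputable def psiK (k : ℕ) (θ μ X : ℝ) : ℝ :=
  (1 / X) * ∑ y ∈ Finset.Icc (1 : ℤ) ⌊X⌋,
    (if nint ((k : ℝ) * θ * y + μ) = 0 then X ^ (k - 1)
     else min (X ^ (k - 1)) (1 / nint ((k : ℝ) * θ * y + μ)))

/-- `ψ_k^*(θ; X) = sup_μ ψ_k(θ, μ; X)`. -/
noncomputable def psiKstar (k : ℕ) (θ X : ℝ) : ℝ := ⨆ μ : ℝ, psiK k θ μ X

/-- The Vinogradov mean value `J_{b,k}(X)`. -/
noncomputable def J (b k : ℕ) (X : ℝ) : ℝ :=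
  ∫ β in Set.Icc (0 : Fin k → ℝ) 1,
    ‖∑ x ∈ Finset.Icc (1 : ℤ) ⌊X⌋, e (∑ i : Fin k, β i * (x : ℝ) ^ (i.1 + 1))‖ ^ (2 * b)

/-- `g_k(α, θ; X) = ∑_{|x| ≤ X} e(P_{k-2}(α; x) + θ x^k)`. -/
noncomputable def gK (k : ℕ) (α : Fin (k - 2) → ℝ) (θ X : ℝ) : ℂ :=
  ∑ x ∈ Finset.Icc (-⌊X⌋) ⌊X⌋,
    e ((∑ i, α i * (x : ℝ) ^ (i.1 + 1)) + θ * (x : ℝ) ^ k)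

/-! ### The additive character -/

lemma e_add (a b : ℝ) : e (a + b) = e a * e b := by
  unfold e
  rw [← Complex.exp_add]
  push_cast
  ring_nf

lemma e_zero : e 0 = 1 := by simp [e]

lemma e_neg_mul (a : ℝ) : e (-a) * e a = 1 := by
  rw [← e_add, neg_add_cancel, e_zero]

lemma norm_e (a : ℝ) : ‖e a‖ = 1 := by
  have h : (2 * Real.pi * Complex.I * a : ℂ) = ((2 * Real.pi * a : ℝ) : ℂ) * Complex.I := by
    push_cast; ring
  rw [e, h, Complex.norm_exp_ofReal_mul_I]

lemma conj_e (a : ℝ) : (starRingEnd ℂ) (e a) = e (-a) := by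
  unfold e
  rw [← Complex.exp_conj]
  have h2 : (starRingEnd ℂ) 2 = 2 := Complex.conj_ofNat 2
  simp [h2]

lemma e_eq_one_iff (a : ℝ) : e a = 1 ↔ ∃ n : ℤ, a = n := by
  unfold e
  rw [Complex.exp_eq_one_iff]
  have hpi : (2 * Real.pi * Complex.I : ℂ) ≠ 0 := Complex.two_pi_I_ne_zero
  refine exists_congr fun n => ?_
  rw [mul_comm, mul_left_inj' hpi]
  exact_mod_cast Iff.rfl

lemma e_int (n : ℤ) : e n = 1 := (e_eq_one_iff _).2 ⟨n, rfl⟩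

lemma e_nat_mul (n : ℕ) (a : ℝ) : e (n * a) = e a ^ n := by
  unfold e
  rw [← Complex.exp_nat_mul]
  push_cast
  ring_nf

@[fun_prop]
lemma continuous_e : Continuous e := by
  unfold e
  fun_prop

lemma e_add_int (a : ℝ) (n : ℤ) : e (a + n) = e a := by
  rw [e_add, e_int, mul_one]

/-- The circle-valued exponential of Mathlib agrees with `e`. -/
lemma toCircle_coe (a : ℝ) : ((AddCircle.toCircle (a : UnitAddCircle) : Circle) : ℂ) = e a := by
  rw [AddCircle.toCircle_apply_mk, Circle.coe_exp, e]
  congr 1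
  push_cast
  ring

/-! ### Dirichlet kernels -/

/-- The Dirichlet kernel `∑_{|n| ≤ M} e(n u)`. -/
noncomputable def dirichlet (M : ℤ) (u : ℝ) : ℂ := ∑ n ∈ Finset.Icc (-M) M, e (n * u)

lemma continuous_dirichlet (M : ℤ) : Continuous (dirichlet M) := by
  unfold dirichlet
  fun_prop

lemma norm_dirichlet_le (M : ℤ) (hM : 0 ≤ M) (u : ℝ) : ‖dirichlet M u‖ ≤ 2 * M + 1 := by
  unfold dirichlet
  refine (norm_sum_le _ _).trans ?_
  simp only [norm_e, sum_const, Int.card_Icc, nsmul_eq_mul, mul_one]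
  have : ((M + 1 - -M).toNat : ℤ) = 2 * M + 1 := by omega
  exact_mod_cast this.le

lemma dirichlet_telescope (M : ℕ) (u : ℝ) :
    (e u - 1) * dirichlet M u = e ((M + 1) * u) - e (-(M * u)) := by
  induction M with
  | zero => simp [dirichlet, e_zero]
  | succ M ih =>
    have h : Finset.Icc (-((M + 1 : ℕ) : ℤ)) ((M + 1 : ℕ) : ℤ)
        = insert (-((M : ℤ) + 1)) (insert ((M : ℤ) + 1) (Finset.Icc (-(M : ℤ)) M)) := by
      ext n
      simp only [Finset.mem_Icc, Finset.mem_insert]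
      push_cast
      omega
    have h1 : dirichlet ((M + 1 : ℕ) : ℤ) u
        = e (-(((M : ℝ) + 1) * u)) + (e (((M : ℝ) + 1) * u) + dirichlet M u) := by
      unfold dirichlet
      rw [h, Finset.sum_insert, Finset.sum_insert]
      · push_cast
        rw [neg_mul]
      · simp
      · simp only [Finset.mem_insert, Finset.mem_Icc]
        omega
    rw [h1, mul_add, mul_add, ih]
    have h2 : e (((M + 1 : ℕ) + 1) * u) = e u * e (((M : ℝ) + 1) * u) := by
      rw [← e_add]; push_cast; ring_nf
    have h3 : e (-(M * u)) = e u * e (-(((M : ℝ) + 1) * u)) := by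
      rw [← e_add]; ring_nf
    rw [h2, h3]
    push_cast
    ring

lemma four_nint_le (u : ℝ) : 4 * nint u ≤ ‖e u - 1‖ := by
  have h0 : e u = e (u - round u) := by
    rw [sub_eq_add_neg, ← Int.cast_neg, e_add_int]
  have h1 : e (u - round u) = Complex.exp (Complex.I * ((2 * Real.pi * (u - round u) : ℝ) : ℂ)) := by
    unfold e
    push_cast
    ring_nf
  rw [h0, h1, Complex.norm_exp_I_mul_ofReal_sub_one]
  have h2 : |u - round u| ≤ 1 / 2 := abs_sub_round u
  have hpi := Real.pi_pos
  have h3 : |Real.pi * (u - round u)| ≤ Real.pi / 2 := by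
    rw [abs_mul, abs_of_pos hpi]
    nlinarith
  have h4 := Real.mul_abs_le_abs_sin h3
  rw [abs_mul, abs_of_pos hpi] at h4
  have h5 : 2 / Real.pi * (Real.pi * |u - round u|) = 2 * |u - round u| := by
    field_simp
  rw [h5] at h4
  rw [show 2 * Real.pi * (u - round u) / 2 = Real.pi * (u - round u) by ring, norm_mul,
    Real.norm_eq_abs, Real.norm_eq_abs, abs_two]
  unfold nint
  linarith

lemma norm_dirichlet_mul_nint_le (M : ℤ) (hM : 0 ≤ M) (u : ℝ) :
    ‖dirichlet M u‖ * nint u ≤ 1 := by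
  lift M to ℕ using hM
  have h := congrArg norm (dirichlet_telescope M u)
  rw [norm_mul] at h
  have h2 : ‖e ((M + 1) * u) - e (-(M * u))‖ ≤ 2 := by
    refine (norm_sub_le _ _).trans ?_
    rw [norm_e, norm_e]; norm_num
  have h3 := four_nint_le u
  have h4 := norm_nonneg (dirichlet M u)
  nlinarith [mul_le_mul_of_nonneg_right h3 h4]

/-- The truncated reciprocal `min(Y, 1/‖u‖)`, equal to `Y` when `‖u‖ = 0`. -/
noncomputable def truncRecip (Y u : ℝ) : ℝ :=
  if nint u = 0 then Y else min Y (1 / nint u)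

lemma nint_nonneg (u : ℝ) : 0 ≤ nint u := abs_nonneg _

lemma truncRecip_nonneg {Y : ℝ} (hY : 0 ≤ Y) (u : ℝ) : 0 ≤ truncRecip Y u := by
  unfold truncRecip
  split_ifs
  · exact hY
  · exact le_min hY (by have := nint_nonneg u; positivity)

lemma truncRecip_le (Y u : ℝ) : truncRecip Y u ≤ Y := by
  unfold truncRecip
  split_ifs
  · exact le_rfl
  · exact min_le_left _ _

/-- The Dirichlet kernel of degree `M` is dominated by `min(Y, 1/‖u‖)` as soon as `M ≪ Y`; this is
where `ψ` comes from. -/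
lemma norm_dirichlet_le_truncRecip {M : ℤ} (hM : 0 ≤ M) {C Y : ℝ} (hC : 1 ≤ C)
    (hMY : 2 * M + 1 ≤ C * Y) (u : ℝ) : ‖dirichlet M u‖ ≤ C * truncRecip Y u := by
  have h1 := (norm_dirichlet_le M hM u).trans hMY
  unfold truncRecip
  split_ifs with h
  · exact h1
  · have hpos : 0 < nint u := lt_of_le_of_ne (nint_nonneg u) (Ne.symm h)
    rw [mul_min_of_nonneg _ _ (by linarith)]
    refine le_min h1 ?_
    have h2 := norm_dirichlet_mul_nint_le M hM u
    rw [← le_div_iff₀ hpos] at h2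
    refine h2.trans ?_
    have : 0 ≤ 1 / nint u := by positivity
    nlinarith

/-! ### Detecting an interval by additive characters modulo `N` -/

lemma sum_range_e (N : ℕ) (hN : 0 < N) (z : ℤ) :
    ∑ j ∈ Finset.range N, e ((j : ℝ) / N * z) = if (N : ℤ) ∣ z then (N : ℂ) else 0 := by
  have hN' : (N : ℝ) ≠ 0 := by positivity
  have h1 : ∀ j : ℕ, e ((j : ℝ) / N * z) = e ((z : ℝ) / N) ^ j := by
    intro j
    rw [← e_nat_mul]
    congr 1
    ring
  simp_rw [h1]
  split_ifs with h
  · obtain ⟨m, rfl⟩ := h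
    have : e (((N * m : ℤ) : ℝ) / N) = 1 := by
      rw [e_eq_one_iff]
      exact ⟨m, by push_cast; field_simp⟩
    simp only [this, one_pow, sum_const, Finset.card_range, nsmul_eq_mul, mul_one]
  · have hne : e ((z : ℝ) / N) ≠ 1 := by
      rw [Ne, e_eq_one_iff]
      rintro ⟨m, hm⟩
      apply h
      refine ⟨m, ?_⟩
      rw [div_eq_iff hN'] at hm
      have : (z : ℝ) = ((N * m : ℤ) : ℝ) := by rw [hm]; push_cast; ring
      exact_mod_cast this
    rw [geom_sum_eq hne, ← e_nat_mul]
    have : e ((N : ℝ) * ((z : ℝ) / N)) = 1 := by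
      rw [mul_div_cancel₀ _ hN', e_int]
    rw [this, sub_self, zero_div]

/-- The sum of `a` over `[-H, H]`, rewritten as a combination of complete sums over the translated
interval `1 ≤ x ≤ N`. The residues of the `x - h` modulo `N` are distinct and `[-H, H]` is
contained in the range of `x - h`, so the characters modulo `N` detect the condition
`|x - h| ≤ H`. -/
lemma sum_shift_eq (a : ℤ → ℂ) (N : ℕ) (hN : 0 < N) (H h : ℤ) (h1 : H + 1 ≤ h)
    (h2 : h + H ≤ N) :
    ∑ z ∈ Finset.Icc (-H) H, a z =
      ∑ j ∈ Finset.range N, (1 / (N : ℂ)) * dirichlet H (-((j : ℝ) / N)) *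
        ∑ x ∈ Finset.Icc (1 : ℤ) N, a (x - h) * e ((j : ℝ) / N * ((x - h : ℤ) : ℝ)) := by
  have hN' : (N : ℂ) ≠ 0 := by exact_mod_cast hN.ne'
  have key : ∀ j ∈ Finset.range N, (1 / (N : ℂ)) * dirichlet H (-((j : ℝ) / N)) *
        ∑ x ∈ Finset.Icc (1 : ℤ) N, a (x - h) * e ((j : ℝ) / N * ((x - h : ℤ) : ℝ))
      = ∑ x ∈ Finset.Icc (1 : ℤ) N, ∑ w ∈ Finset.Icc (-H) H,
        (1 / (N : ℂ)) * a (x - h) * e ((j : ℝ) / N * ((x - h - w : ℤ) : ℝ)) := by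
    intro j _
    rw [Finset.mul_sum]
    refine Finset.sum_congr rfl fun x _ => ?_
    unfold dirichlet
    rw [Finset.mul_sum, Finset.sum_mul]
    refine Finset.sum_congr rfl fun w _ => ?_
    have : e ((j : ℝ) / N * ((x - h - w : ℤ) : ℝ))
        = e (w * (-((j : ℝ) / N))) * e ((j : ℝ) / N * ((x - h : ℤ) : ℝ)) := by
      rw [← e_add]; push_cast; ring_nf
    rw [this]
    ring
  rw [Finset.sum_congr rfl key, Finset.sum_comm]
  have key2 : ∀ x ∈ Finset.Icc (1 : ℤ) N, ∑ j ∈ Finset.range N, ∑ w ∈ Finset.Icc (-H) H,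
        (1 / (N : ℂ)) * a (x - h) * e ((j : ℝ) / N * ((x - h - w : ℤ) : ℝ))
      = ∑ w ∈ Finset.Icc (-H) H, if w = x - h then a w else 0 := by
    intro x hx
    rw [Finset.sum_comm]
    refine Finset.sum_congr rfl fun w hw => ?_
    rw [← Finset.mul_sum, sum_range_e N hN]
    rw [Finset.mem_Icc] at hx hw
    by_cases hxw : w = x - h
    · subst hxw
      simp only [sub_self, dvd_zero, if_true]
      field_simp
    · rw [if_neg hxw, if_neg, mul_zero]
      intro hd
      have := Int.eq_zero_of_abs_lt_dvd hd (by rw [abs_lt]; constructor <;> omega)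
      omega
  rw [Finset.sum_congr rfl key2, Finset.sum_comm]
  refine Finset.sum_congr rfl fun w hw => ?_
  rw [Finset.mem_Icc] at hw
  have : ∀ x ∈ Finset.Icc (1 : ℤ) N, (if w = x - h then a w else 0) = if x = w + h then a w else 0 := by
    intro x _
    refine if_congr ?_ rfl rfl
    omega
  rw [Finset.sum_congr rfl this, Finset.sum_ite_eq', if_pos]
  rw [Finset.mem_Icc]
  omega

/-- For `0 < j < N`, `N‖j/N‖` is one of `j`, `N - j`, so its reciprocal is at most the sum of
theirs; stated without dividing by `‖j/N‖`. -/
lemma inv_nint_le (N j : ℕ) (hj : 0 < j) (hjN : j < N) :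
    ((j : ℝ) ⁻¹ + ((N - j : ℕ) : ℝ)⁻¹) * N * nint (-((j : ℝ) / N)) ≥ 1 := by
  have hN : (0 : ℝ) < N := by exact_mod_cast hj.trans hjN
  have hj' : (0 : ℝ) < j := by exact_mod_cast hj
  have hNj : (0 : ℝ) < ((N - j : ℕ) : ℝ) := by exact_mod_cast Nat.sub_pos_of_lt hjN
  set r := round (-((j : ℝ) / N))
  have h1 : N * nint (-((j : ℝ) / N)) = |((j + r * N : ℤ) : ℝ)| := by
    unfold nint
    rw [← abs_of_pos hN, ← abs_mul, ← abs_neg, abs_of_pos hN]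
    congr 1
    push_cast
    field_simp
    ring
  rw [mul_assoc, h1]
  have h2 : (j : ℝ) ≤ |((j + r * N : ℤ) : ℝ)| ∨ ((N - j : ℕ) : ℝ) ≤ |((j + r * N : ℤ) : ℝ)| := by
    rcases le_or_gt 0 r with hr | hr
    · left
      rw [← Int.cast_abs]
      have : (j : ℤ) ≤ |j + r * N| := by
        refine le_trans ?_ (le_abs_self _)
        nlinarith [Int.natCast_nonneg N]
      exact_mod_cast this
    · right
      rw [← Int.cast_abs]
      have : ((N - j : ℕ) : ℤ) ≤ |j + r * N| := by
        refine le_trans ?_ (neg_le_abs _)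
        have : r * N ≤ -1 * N := mul_le_mul_of_nonneg_right (by omega) (Int.natCast_nonneg N)
        omega
      exact_mod_cast this
  rw [ge_iff_le, add_mul]
  have e1 := mul_nonneg (inv_nonneg.2 hj'.le) (abs_nonneg ((j + r * N : ℤ) : ℝ))
  have e2 := mul_nonneg (inv_nonneg.2 hNj.le) (abs_nonneg ((j + r * N : ℤ) : ℝ))
  rcases h2 with h | h
  · have := mul_le_mul_of_nonneg_left h (inv_nonneg.2 hj'.le)
    rw [inv_mul_cancel₀ hj'.ne'] at this
    linarith
  · have := mul_le_mul_of_nonneg_left h (inv_nonneg.2 hNj.le)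
    rw [inv_mul_cancel₀ hNj.ne'] at this
    linarith

lemma nonneg_le_of_mul_le {x y n : ℝ} (h1 : x * n ≤ 1) (h2 : 1 ≤ y * n) (hn : 0 ≤ n) : x ≤ y := by
  rcases hn.eq_or_lt with h | h
  · subst h; norm_num at h2
  · exact le_of_mul_le_mul_right (h1.trans h2) h

/-- The discrete `L¹` norm of the Dirichlet kernel is at most logarithmic. -/
lemma sum_norm_dirichlet_le (N : ℕ) (hN : 0 < N) (H : ℤ) (hH : 0 ≤ H) (hHN : 2 * H + 1 ≤ N) :
    ∑ j ∈ Finset.range N, (1 / (N : ℝ)) * ‖dirichlet H (-((j : ℝ) / N))‖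
      ≤ 3 + 2 * Real.log N := by
  obtain ⟨n, rfl⟩ : ∃ n, N = n + 1 := ⟨N - 1, by omega⟩
  have hN' : (0 : ℝ) < ((n + 1 : ℕ) : ℝ) := by positivity
  rw [Finset.sum_range_succ']
  have h0 : 1 / ((n + 1 : ℕ) : ℝ) * ‖dirichlet H (-(((0 : ℕ) : ℝ) / (n + 1 : ℕ)))‖ ≤ 1 := by
    rw [one_div, inv_mul_le_iff₀ hN', mul_one]
    refine (norm_dirichlet_le H hH _).trans ?_
    exact_mod_cast hHN
  have h1 : ∀ j ∈ Finset.range n,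
      1 / ((n + 1 : ℕ) : ℝ) * ‖dirichlet H (-(((j + 1 : ℕ) : ℝ) / (n + 1 : ℕ)))‖
        ≤ ((j + 1 : ℕ) : ℝ)⁻¹ + ((n - 1 - j + 1 : ℕ) : ℝ)⁻¹ := by
    intro j hj
    rw [Finset.mem_range] at hj
    rw [one_div, inv_mul_le_iff₀ hN']
    have := nonneg_le_of_mul_le (norm_dirichlet_mul_nint_le H hH _)
      (inv_nint_le (n + 1) (j + 1) (by omega) (by omega)) (nint_nonneg _)
    rw [show n + 1 - (j + 1) = n - 1 - j + 1 by omega] at this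
    linarith
  have h2 := Finset.sum_le_sum h1
  rw [Finset.sum_add_distrib,
    Finset.sum_range_reflect (fun j => ((j + 1 : ℕ) : ℝ)⁻¹) n] at h2
  have h3 : ∑ j ∈ Finset.range n, ((j + 1 : ℕ) : ℝ)⁻¹ ≤ 1 + Real.log (n + 1 : ℕ) := by
    have h4 : ∑ j ∈ Finset.range n, ((j + 1 : ℕ) : ℝ)⁻¹ = ((harmonic n : ℚ) : ℝ) := by
      unfold harmonic
      push_cast
      rfl
    rw [h4]
    refine (harmonic_le_one_add_log n).trans ?_
    rcases Nat.eq_zero_or_pos n with h | h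
    · subst h; simp
    · have : (0 : ℝ) < n := by exact_mod_cast h
      gcongr
      simp
  linarith

/-- Hölder's inequality (convexity of the power function) with unnormalized weights `w`. -/
lemma pow_sum_le (s : Finset ℕ) (w z : ℕ → ℝ) (hw : ∀ i ∈ s, 0 ≤ w i) (hz : ∀ i ∈ s, 0 ≤ z i)
    (n : ℕ) : (∑ i ∈ s, w i * z i) ^ (n + 1) ≤
      (∑ i ∈ s, w i) ^ n * ∑ i ∈ s, w i * z i ^ (n + 1) := by
  rcases (Finset.sum_nonneg hw).eq_or_lt with h | h
  · have h0 : ∀ i ∈ s, w i = 0 := (Finset.sum_eq_zero_iff_of_nonneg hw).1 h.symm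
    have h1 : ∑ i ∈ s, w i * z i = 0 := Finset.sum_eq_zero fun i hi => by rw [h0 i hi, zero_mul]
    have h2 : ∑ i ∈ s, w i * z i ^ (n + 1) = 0 :=
      Finset.sum_eq_zero fun i hi => by rw [h0 i hi, zero_mul]
    simp [h1, h2]
  · set W := ∑ i ∈ s, w i with hW
    have := Real.pow_arith_mean_le_arith_mean_pow s (fun i => w i / W) z
      (fun i hi => div_nonneg (hw i hi) h.le)
      (by rw [← Finset.sum_div, ← hW, div_self h.ne']) hz (n + 1)
    simp_rw [div_mul_eq_mul_div] at this
    rw [← Finset.sum_div, ← Finset.sum_div, div_pow, div_le_div_iff₀ (by positivity) h] at this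
    have h3 : W * (∑ i ∈ s, w i * z i) ^ (n + 1) ≤
        W * (W ^ n * ∑ i ∈ s, w i * z i ^ (n + 1)) := by
      calc _ = (∑ i ∈ s, w i * z i) ^ (n + 1) * W := by ring
        _ ≤ _ := this
        _ = _ := by ring
    exact le_of_mul_le_mul_left h3 h

/-! ### Trigonometric polynomials and the reproducing kernel -/

/-- `f` is a trigonometric polynomial of degree at most `M`, with frequencies listed by an
arbitrary finite type (repetitions allowed). -/
def IsTrigPoly (M : ℤ) (f : ℝ → ℂ) : Prop :=
  ∃ (ι : Type) (_ : Fintype ι) (c : ι → ℂ) (m : ι → ℤ), (∀ i, |m i| ≤ M) ∧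
    ∀ t, f t = ∑ i, c i * e (m i * t)

lemma IsTrigPoly.mul {M M' : ℤ} {f g : ℝ → ℂ} (hf : IsTrigPoly M f) (hg : IsTrigPoly M' g) :
    IsTrigPoly (M + M') (fun t => f t * g t) := by
  obtain ⟨ι, _, c, m, hm, hc⟩ := hf
  obtain ⟨ι', _, c', m', hm', hc'⟩ := hg
  refine ⟨ι × ι', inferInstance, fun p => c p.1 * c' p.2, fun p => m p.1 + m' p.2,
    fun p => (abs_add_le _ _).trans (add_le_add (hm _) (hm' _)), fun t => ?_⟩
  simp only [hc, hc']
  rw [Finset.sum_mul_sum, Fintype.sum_prod_type]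
  refine Finset.sum_congr rfl fun i _ => Finset.sum_congr rfl fun j _ => ?_
  push_cast
  rw [add_mul, e_add]
  ring

lemma IsTrigPoly.pow {M : ℤ} {f : ℝ → ℂ} (hf : IsTrigPoly M f) (n : ℕ) :
    IsTrigPoly (n * M) (fun t => f t ^ n) := by
  induction n with
  | zero =>
    exact ⟨Unit, inferInstance, fun _ => 1, fun _ => 0, by simp, by simp [e_zero]⟩
  | succ n ih =>
    have := ih.mul hf
    rw [show (n : ℤ) * M + M = ((n + 1 : ℕ) : ℤ) * M by push_cast; ring] at this
    simpa only [pow_succ] using this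

lemma IsTrigPoly.conj {M : ℤ} {f : ℝ → ℂ} (hf : IsTrigPoly M f) :
    IsTrigPoly M (fun t => (starRingEnd ℂ) (f t)) := by
  obtain ⟨ι, _, c, m, hm, hc⟩ := hf
  refine ⟨ι, inferInstance, fun i => (starRingEnd ℂ) (c i), fun i => - m i,
    fun i => by rw [abs_neg]; exact hm i, fun t => ?_⟩
  simp only [hc]
  rw [map_sum]
  refine Finset.sum_congr rfl fun i _ => ?_
  rw [map_mul, conj_e]
  push_cast
  rw [neg_mul]

lemma integral_e_int (n : ℤ) : ∫ s in (0 : ℝ)..1, e (n * s) = if n = 0 then 1 else 0 := by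
  split_ifs with h
  · subst h; simp [e_zero]
  · have hc : (2 * Real.pi * Complex.I * n : ℂ) ≠ 0 :=
      mul_ne_zero Complex.two_pi_I_ne_zero (by exact_mod_cast h)
    have h1 : ∀ s : ℝ, e (n * s) = Complex.exp (2 * Real.pi * Complex.I * n * s) := by
      intro s; unfold e; push_cast; ring_nf
    simp_rw [h1]
    rw [integral_exp_mul_complex hc]
    have h2 : Complex.exp (2 * Real.pi * Complex.I * n * (1 : ℝ)) = 1 := by
      have := h1 1
      rw [mul_one, e_int] at this
      exact this.symm
    rw [h2]
    simp

/-- Convolution with the Dirichlet kernel reproduces trigonometric polynomials. -/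
lemma IsTrigPoly.reproduce {M : ℤ} {f : ℝ → ℂ} (hf : IsTrigPoly M f) (t : ℝ) :
    f t = ∫ s in (0 : ℝ)..1, f s * dirichlet M (s - t) := by
  obtain ⟨ι, _, c, m, hm, hc⟩ := hf
  have h1 : ∀ s, f s * dirichlet M (s - t) =
      ∑ i, ∑ n ∈ Finset.Icc (-M) M, c i * e (-(n * t)) * e (((m i + n : ℤ) : ℝ) * s) := by
    intro s
    rw [hc, dirichlet, Finset.sum_mul]
    refine Finset.sum_congr rfl fun i _ => ?_
    rw [Finset.mul_sum]
    refine Finset.sum_congr rfl fun n _ => ?_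
    have : e (n * (s - t)) = e (-(n * t)) * e (n * s) := by rw [← e_add]; ring_nf
    rw [this]
    push_cast
    rw [add_mul, e_add]
    ring
  simp_rw [h1]
  rw [intervalIntegral.integral_finsetSum, hc]
  · refine Finset.sum_congr rfl fun i _ => ?_
    rw [intervalIntegral.integral_finsetSum]
    · have : ∀ n ∈ Finset.Icc (-M) M,
          ∫ s in (0 : ℝ)..1, c i * e (-(n * t)) * e (((m i + n : ℤ) : ℝ) * s)
            = if n = - m i then c i * e (m i * t) else 0 := by
        intro n _
        rw [intervalIntegral.integral_const_mul, integral_e_int]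
        by_cases hn : n = - m i
        · subst hn
          simp
        · rw [if_neg hn, if_neg (by omega), mul_zero]
      rw [Finset.sum_congr rfl this, Finset.sum_ite_eq', if_pos]
      have := abs_le.1 (hm i)
      rw [Finset.mem_Icc]
      omega
    · intro n _
      exact Continuous.intervalIntegrable (by fun_prop) _ _
  · intro i _
    exact Continuous.intervalIntegrable (by fun_prop) _ _

lemma norm_le_integral_of_isTrigPoly {M : ℤ} {T : ℝ → ℝ} (hT : ∀ t, 0 ≤ T t)
    (hf : IsTrigPoly M (fun t => (T t : ℂ))) (t : ℝ) :
    T t ≤ ∫ s in (0 : ℝ)..1, T s * ‖dirichlet M (s - t)‖ := by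
  have h := hf.reproduce t
  calc T t = ‖(T t : ℂ)‖ := by rw [Complex.norm_real, Real.norm_of_nonneg (hT t)]
    _ = ‖∫ s in (0 : ℝ)..1, (T s : ℂ) * dirichlet M (s - t)‖ := by rw [← h]
    _ ≤ ∫ s in (0 : ℝ)..1, ‖(T s : ℂ) * dirichlet M (s - t)‖ :=
      intervalIntegral.norm_integral_le_integral_norm zero_le_one
    _ = _ := by
      refine intervalIntegral.integral_congr fun s _ => ?_
      simp only [norm_mul, Complex.norm_real, Real.norm_of_nonneg (hT s)]

/-- The `2b`-th power of the modulus of an exponential sum over `1 ≤ x ≤ N` is a trigonometric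
polynomial in the coefficient of `x^d`. -/
lemma isTrigPoly_norm_pow (N : ℤ) (c : ℤ → ℂ) (d b : ℕ) :
    IsTrigPoly (2 * b * N ^ d)
      (fun t => ((‖∑ x ∈ Finset.Icc (1 : ℤ) N, c x * e (t * (x : ℝ) ^ d)‖ ^ (2 * b) : ℝ) : ℂ)) := by
  have h1 : IsTrigPoly (N ^ d) (fun t => ∑ x ∈ Finset.Icc (1 : ℤ) N, c x * e (t * (x : ℝ) ^ d)) := by
    refine ⟨Finset.Icc (1 : ℤ) N, inferInstance, fun x => c x, fun x => (x : ℤ) ^ d, ?_, ?_⟩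
    · rintro ⟨x, hx⟩
      rw [Finset.mem_Icc] at hx
      rw [abs_of_nonneg (by have := hx.1; positivity)]
      exact pow_le_pow_left₀ (by omega) hx.2 d
    · intro t
      simp only
      rw [← Finset.sum_coe_sort (Finset.Icc (1 : ℤ) N)]
      refine Finset.sum_congr rfl fun x _ => ?_
      push_cast
      rw [mul_comm t]
  have h2 := (h1.mul h1.conj).pow b
  rw [show (b : ℤ) * (N ^ d + N ^ d) = 2 * b * N ^ d by ring] at h2
  convert h2 using 2 with t
  rw [Complex.mul_conj, Complex.normSq_eq_norm_sq]
  push_cast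
  rw [pow_mul]

/-! ### Unimodular affine substitutions on the unit cube -/

lemma integral_cube_eq_torus {d : ℕ} (Φ : UnitAddTorus (Fin d) → ℝ) (hΦ : Continuous Φ) :
    ∫ α in Set.Icc (0 : Fin d → ℝ) 1, Φ (fun i => (α i : UnitAddCircle)) = ∫ a, Φ a := by
  have hmp := measurePreserving_pi (fun _ : Fin d => (volume : Measure ℝ).restrict (Set.Ioc 0 (0 + 1)))
    (fun _ => (volume : Measure UnitAddCircle)) (fun _ => UnitAddCircle.measurePreserving_mk 0)
  have h2 := integral_map (μ := Measure.pi fun _ : Fin d => volume.restrict (Set.Ioc (0 : ℝ) (0 + 1)))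
    hmp.measurable.aemeasurable (f := Φ) hΦ.aestronglyMeasurable
  rw [hmp.map_eq, ← Measure.restrict_pi_pi] at h2
  rw [volume_pi, volume_pi, h2]
  refine setIntegral_congr_set ?_
  have h := (Measure.univ_pi_Ioc_ae_eq_Icc (μ := fun _ : Fin d => (volume : Measure ℝ))
    (f := 0) (g := 1)).symm
  convert h using 1
  simp

/-- An affine map with integral linear part of determinant `1` induces a measure-preserving map of
the torus, hence preserves integrals of periodic functions over the unit cube. -/
lemma integral_cube_affine {d : ℕ} (Φ : UnitAddTorus (Fin d) → ℝ) (hΦ : Continuous Φ)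
    (L : Matrix (Fin d) (Fin d) ℤ) (hL : L.det = 1) (v : Fin d → ℝ) :
    ∫ α in Set.Icc (0 : Fin d → ℝ) 1,
        Φ (fun l => ((∑ i, (L l i : ℝ) * α i + v l : ℝ) : UnitAddCircle))
      = ∫ α in Set.Icc (0 : Fin d → ℝ) 1, Φ (fun i => (α i : UnitAddCircle)) := by
  let act (A : Matrix (Fin d) (Fin d) ℤ) : UnitAddTorus (Fin d) →+ UnitAddTorus (Fin d) :=
    { toFun := fun a l => ∑ i, A l i • a i
      map_zero' := by ext l; simp
      map_add' := fun a b => by ext l; simp [Finset.sum_add_distrib] }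
  have hmul : ∀ A B a, act A (act B a) = act (A * B) a := by
    intro A B a
    ext l
    simp only [act, AddMonoidHom.coe_mk, ZeroHom.coe_mk, Matrix.mul_apply, Finset.sum_smul,
      Finset.smul_sum, mul_smul]
    rw [Finset.sum_comm]
  have hone : ∀ a, act 1 a = a := by
    intro a
    ext l
    simp [act, Matrix.one_apply, ite_smul]
  have hcont : Continuous (act L) := by
    refine continuous_pi fun l => ?_
    change Continuous fun a : UnitAddTorus (Fin d) => ∑ i, L l i • a i
    fun_prop
  have hsurj : Function.Surjective (act L) := by
    intro a
    refine ⟨act L.adjugate a, ?_⟩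
    rw [hmul, Matrix.mul_adjugate, hL, one_smul, hone]
  have hmp : MeasurePreserving (act L) volume volume :=
    AddMonoidHom.measurePreserving hcont hsurj rfl
  have hmp2 : MeasurePreserving (fun a => act L a + fun l => (v l : UnitAddCircle))
      volume volume :=
    (measurePreserving_add_right (volume : Measure (UnitAddTorus (Fin d)))
      (fun l => (v l : UnitAddCircle))).comp hmp
  have h1 : ∀ α : Fin d → ℝ,
      Φ (fun l => ((∑ i, (L l i : ℝ) * α i + v l : ℝ) : UnitAddCircle))
        = (fun a => Φ (act L a + fun l => (v l : UnitAddCircle)))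
          (fun i => (α i : UnitAddCircle)) := by
    intro α
    simp only
    congr 1
    ext l
    simp only [act, AddMonoidHom.coe_mk, ZeroHom.coe_mk, Pi.add_apply, AddCircle.coe_add]
    congr 1
    rw [← QuotientAddGroup.mk'_apply, map_sum]
    refine Finset.sum_congr rfl fun i _ => ?_
    rw [← zsmul_eq_mul, map_zsmul]
    rfl
  simp_rw [h1]
  rw [integral_cube_eq_torus (fun a => Φ (act L a + fun l => (v l : UnitAddCircle)))
    (hΦ.comp (hcont.add continuous_const)), integral_cube_eq_torus Φ hΦ]
  have h2 := integral_map (μ := volume) hmp2.measurable.aemeasurable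
    (f := Φ) hΦ.aestronglyMeasurable
  rw [hmp2.map_eq] at h2
  exact h2.symm

/-- The matrix of the substitution `x ↦ x - h` on the coefficients of degrees `1, …, d` of a
polynomial of degree at most `d`; constant terms are discarded. -/
def shiftMat (d : ℕ) (h : ℤ) : Matrix (Fin d) (Fin d) ℤ :=
  Matrix.of fun l i => ((i.1 + 1).choose (l.1 + 1) : ℤ) * (-h) ^ (i.1 - l.1)

lemma det_shiftMat (d : ℕ) (h : ℤ) : (shiftMat d h).det = 1 := by
  rw [Matrix.det_of_isUpperTriangular]
  · simp [shiftMat]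
  · intro l i hli
    simp only [id] at hli
    simp only [shiftMat, Matrix.of_apply]
    rw [Nat.choose_eq_zero_of_lt (by have : i.1 < l.1 := hli; omega)]
    simp

/-- Binomial expansion of `(x - h)^(n+1)` for `n + 1 ≤ d`, with the nonconstant terms indexed by
`Fin d`; those of degree above `n + 1` have coefficient `0`. -/
lemma sub_pow_eq (d n : ℕ) (hn : n < d) (x h : ℝ) :
    (x - h) ^ (n + 1) = (-h) ^ (n + 1) +
      ∑ l : Fin d, ((n + 1).choose (l.1 + 1) : ℝ) * (-h) ^ (n - l.1) * x ^ (l.1 + 1) := by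
  rw [sub_eq_add_neg, add_pow, Finset.sum_range_succ', Fin.sum_univ_eq_sum_range
    (fun l => ((n + 1).choose (l + 1) : ℝ) * (-h) ^ (n - l) * x ^ (l + 1)) d]
  rw [add_comm]
  congr 1
  · simp
  · rw [← Finset.sum_subset (Finset.range_mono (show n + 1 ≤ d by omega))]
    · refine Finset.sum_congr rfl fun l _ => ?_
      rw [Nat.add_sub_add_right]
      ring
    · intro l _ hl
      rw [Finset.mem_range, not_lt] at hl
      rw [Nat.choose_eq_zero_of_lt (by omega)]
      simp

lemma sub_pow_top_eq (d : ℕ) (x h : ℝ) :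
    (x - h) ^ (d + 2) = (-h) ^ (d + 2) +
      ∑ l : Fin d, ((d + 2).choose (l.1 + 1) : ℝ) * (-h) ^ (d + 1 - l.1) * x ^ (l.1 + 1)
      - (d + 2) * h * x ^ (d + 1) + x ^ (d + 2) := by
  rw [sub_pow_eq (d + 2) (d + 1) (by omega), Fin.sum_univ_castSucc, Fin.sum_univ_castSucc]
  simp only [Fin.val_castSucc, Fin.val_last]
  have h1 : ((d + 1 + 1).choose (d + 1) : ℝ) = d + 2 := by
    rw [Nat.choose_succ_self_right]; push_cast; ring
  rw [h1]
  simp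
  ring

/-- The exponential sum `∑_{1 ≤ x ≤ N} e(P_d(α; x) + β x^{d+1} + θ x^{d+2})`. -/
noncomputable def fullSum (d : ℕ) (N : ℤ) (α : Fin d → ℝ) (β θ : ℝ) : ℂ :=
  ∑ x ∈ Finset.Icc (1 : ℤ) N,
    e ((∑ i, α i * (x : ℝ) ^ (i.1 + 1)) + β * (x : ℝ) ^ (d + 1) + θ * (x : ℝ) ^ (d + 2))

/-- Translating the variable by `h` in a sum whose phase has no term of degree `d + 1` creates
the coefficient `-(d+2)θh` in that degree; the changes in lower degrees are absorbed by
integrating over `α`. -/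
lemma integral_shift (d : ℕ) (hd : 1 ≤ d) (N h : ℤ) (γ θ : ℝ) (b : ℕ) :
    ∫ α in Set.Icc (0 : Fin d → ℝ) 1,
      ‖∑ x ∈ Finset.Icc (1 : ℤ) N,
        e ((∑ i, α i * ((x - h : ℤ) : ℝ) ^ (i.1 + 1)) + θ * ((x - h : ℤ) : ℝ) ^ (d + 2))
          * e (γ * ((x - h : ℤ) : ℝ))‖ ^ (2 * b)
      = ∫ α in Set.Icc (0 : Fin d → ℝ) 1, ‖fullSum d N α (-((d + 2) * θ * h)) θ‖ ^ (2 * b) := by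
  let Φ : UnitAddTorus (Fin d) → ℝ := fun a =>
    ‖∑ x ∈ Finset.Icc (1 : ℤ) N,
      e (-((d + 2) * θ * h) * (x : ℝ) ^ (d + 1) + θ * (x : ℝ) ^ (d + 2)) *
        ((AddCircle.toCircle (∑ i, (x ^ (i.1 + 1) : ℤ) • a i) : Circle) : ℂ)‖ ^ (2 * b)
  have hΦ : Continuous Φ := by
    refine Continuous.pow (Continuous.norm ?_) _
    refine continuous_finsetSum _ fun x _ => Continuous.mul continuous_const ?_
    refine continuous_subtype_val.comp (AddCircle.continuous_toCircle.comp ?_)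
    exact continuous_finsetSum _ fun i _ => (continuous_apply i).zsmul _
  have hΦe : ∀ α : Fin d → ℝ, Φ (fun i => (α i : UnitAddCircle))
      = ‖fullSum d N α (-((d + 2) * θ * h)) θ‖ ^ (2 * b) := by
    intro α
    simp only [Φ, fullSum]
    congr 2
    refine Finset.sum_congr rfl fun x _ => ?_
    have h1 : ∑ i, (x ^ (i.1 + 1) : ℤ) • (α i : UnitAddCircle)
        = ((∑ i, α i * (x : ℝ) ^ (i.1 + 1) : ℝ) : UnitAddCircle) := by
      rw [← QuotientAddGroup.mk'_apply, map_sum]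
      refine Finset.sum_congr rfl fun i _ => ?_
      rw [mul_comm, ← Int.cast_pow, ← zsmul_eq_mul, map_zsmul]
      rfl
    rw [h1, toCircle_coe, ← e_add]
    congr 1
    ring
  let v : Fin d → ℝ := fun l =>
    θ * (((d + 2).choose (l.1 + 1) : ℝ) * (-h) ^ (d + 1 - l.1)) + if l = ⟨0, hd⟩ then γ else 0
  have key := integral_cube_affine Φ hΦ (shiftMat d h) (det_shiftMat d h) v
  simp_rw [hΦe] at key
  rw [← key]
  congr 1
  ext α
  congr 1
  -- the constant term of the translated phase
  set w : ℝ := (∑ i, α i * (-h) ^ (i.1 + 1)) + θ * (-h) ^ (d + 2) - γ * h with hw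
  have hsum : ∑ x ∈ Finset.Icc (1 : ℤ) N,
        e ((∑ i, α i * ((x - h : ℤ) : ℝ) ^ (i.1 + 1)) + θ * ((x - h : ℤ) : ℝ) ^ (d + 2))
          * e (γ * ((x - h : ℤ) : ℝ))
      = e w * fullSum d N (fun l => ∑ i, (shiftMat d h l i : ℝ) * α i + v l)
          (-((d + 2) * θ * h)) θ := by
    rw [fullSum, Finset.mul_sum]
    refine Finset.sum_congr rfl fun x _ => ?_
    rw [← e_add, ← e_add]
    congr 1
    push_cast
    rw [sub_pow_top_eq]
    have h2 : ∀ i : Fin d, α i * ((x : ℝ) - h) ^ (i.1 + 1) = α i * (-h) ^ (i.1 + 1) +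
        ∑ l : Fin d, (shiftMat d h l i : ℝ) * α i * (x : ℝ) ^ (l.1 + 1) := by
      intro i
      rw [sub_pow_eq d i.1 i.2, mul_add, Finset.mul_sum]
      congr 1
      refine Finset.sum_congr rfl fun l _ => ?_
      simp only [shiftMat, Matrix.of_apply]
      push_cast
      ring
    simp_rw [h2]
    rw [Finset.sum_add_distrib, Finset.sum_comm]
    have h3 : ∑ l : Fin d, (∑ i, (shiftMat d h l i : ℝ) * α i + v l) * (x : ℝ) ^ (l.1 + 1)
        = ∑ l : Fin d, ∑ i, (shiftMat d h l i : ℝ) * α i * (x : ℝ) ^ (l.1 + 1)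
          + θ * (∑ l : Fin d, ((d + 2).choose (l.1 + 1) : ℝ) * (-h) ^ (d + 1 - l.1)
            * (x : ℝ) ^ (l.1 + 1)) + γ * x := by
      have h4 : γ * x = ∑ l : Fin d, if l = ⟨0, hd⟩ then γ * (x : ℝ) ^ (l.1 + 1) else 0 := by
        rw [Finset.sum_ite_eq' Finset.univ (⟨0, hd⟩ : Fin d)]
        simp
      rw [h4, Finset.mul_sum, ← Finset.sum_add_distrib, ← Finset.sum_add_distrib]
      refine Finset.sum_congr rfl fun l _ => ?_
      simp only [v]
      rw [add_mul, Finset.sum_mul]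
      split_ifs <;> ring
    rw [h3, hw]
    ring
  rw [hsum, norm_mul, norm_e, one_mul]

/-! ### The estimate for fixed `θ` -/

lemma psiK_eq (d : ℕ) (θ μ X : ℝ) : psiK (d + 2) θ μ X =
    (1 / X) * ∑ y ∈ Finset.Icc (1 : ℤ) ⌊X⌋, truncRecip (X ^ (d + 1)) ((d + 2) * θ * y + μ) := by
  unfold psiK truncRecip
  push_cast
  rfl

lemma psiK_nonneg (d : ℕ) (θ μ : ℝ) {X : ℝ} (hX : 1 ≤ X) : 0 ≤ psiK (d + 2) θ μ X := by
  rw [psiK_eq]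
  exact mul_nonneg (by positivity)
    (Finset.sum_nonneg fun y _ => truncRecip_nonneg (by positivity) _)

lemma psiK_le (d : ℕ) (θ μ : ℝ) {X : ℝ} (hX : 1 ≤ X) : psiK (d + 2) θ μ X ≤ X ^ (d + 1) := by
  have hX0 : 0 < X := by linarith
  rw [psiK_eq, one_div, inv_mul_le_iff₀ hX0]
  refine (Finset.sum_le_sum fun y _ => truncRecip_le _ _).trans ?_
  rw [Finset.sum_const, nsmul_eq_mul]
  refine mul_le_mul_of_nonneg_right ?_ (by positivity)
  have h1 : ((Finset.Icc (1 : ℤ) ⌊X⌋).card : ℤ) = ⌊X⌋ := by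
    rw [Int.card_Icc]
    have := Int.floor_nonneg.2 hX0.le
    omega
  have h2 : ((Finset.Icc (1 : ℤ) ⌊X⌋).card : ℝ) = (⌊X⌋ : ℝ) := by exact_mod_cast h1
  rw [h2]
  exact Int.floor_le X

lemma psiK_le_psiKstar (d : ℕ) (θ μ : ℝ) {X : ℝ} (hX : 1 ≤ X) :
    psiK (d + 2) θ μ X ≤ psiKstar (d + 2) θ X :=
  le_ciSup (f := fun μ => psiK (d + 2) θ μ X)
    ⟨X ^ (d + 1), by rintro _ ⟨μ, rfl⟩; exact psiK_le d θ μ hX⟩ μ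

lemma psiKstar_nonneg (d : ℕ) (θ : ℝ) {X : ℝ} (hX : 1 ≤ X) : 0 ≤ psiKstar (d + 2) θ X :=
  (psiK_nonneg d θ 0 hX).trans (psiK_le_psiKstar d θ 0 hX)

lemma psiKstar_le (d : ℕ) (θ : ℝ) {X : ℝ} (hX : 1 ≤ X) : psiKstar (d + 2) θ X ≤ X ^ (d + 1) :=
  ciSup_le fun μ => psiK_le d θ μ hX

/-- The supremum over `A` runs over a family bounded by `X^(d+1)`, so it is a genuine upper bound. -/
lemma psiKstar_le_iSup (d : ℕ) {X : ℝ} (hX : 1 ≤ X) (A : Set ℝ) {θ : ℝ} (hθ : θ ∈ A) :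
    psiKstar (d + 2) θ X ≤ ⨆ θ ∈ A, psiKstar (d + 2) θ X := by
  have h1 : psiKstar (d + 2) θ X = ⨆ (_ : θ ∈ A), psiKstar (d + 2) θ X := by
    rw [ciSup_pos hθ]
  rw [h1]
  refine le_ciSup (f := fun θ => ⨆ (_ : θ ∈ A), psiKstar (d + 2) θ X) ⟨X ^ (d + 1), ?_⟩ θ
  rintro _ ⟨t, rfl⟩
  exact Real.iSup_le (fun _ => psiKstar_le d t hX) (by positivity)

/-- The sum `g_{d+2}(α, θ; X)`, with `α` indexed by `Fin d` rather than `Fin (d + 2 - 2)`. -/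
noncomputable def shortSum (d : ℕ) (α : Fin d → ℝ) (θ X : ℝ) : ℂ :=
  ∑ x ∈ Finset.Icc (-⌊X⌋) ⌊X⌋,
    e ((∑ i, α i * (x : ℝ) ^ (i.1 + 1)) + θ * (x : ℝ) ^ (d + 2))

lemma continuous_shortSum (d : ℕ) (X : ℝ) :
    Continuous fun p : (Fin d → ℝ) × ℝ => shortSum d p.1 p.2 X := by
  unfold shortSum
  fun_prop

set_option maxHeartbeats 1000000 in
/-- Hölder's inequality after detecting the range of summation, for a fixed translation `h`. -/
lemma integral_shortSum_le (d : ℕ) (hd : 1 ≤ d) (b : ℕ) (hb : 1 ≤ b) (X θ : ℝ) (N : ℕ) (hN : 0 < N)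
    (h : ℤ) (h1 : ⌊X⌋ + 1 ≤ h) (h2 : h + ⌊X⌋ ≤ N) :
    ∫ α in Set.Icc (0 : Fin d → ℝ) 1, ‖shortSum d α θ X‖ ^ (2 * b) ≤
      (∑ j ∈ Finset.range N, (1 / (N : ℝ)) * ‖dirichlet ⌊X⌋ (-((j : ℝ) / N))‖) ^ (2 * b) *
        ∫ α in Set.Icc (0 : Fin d → ℝ) 1, ‖fullSum d N α (-((d + 2) * θ * h)) θ‖ ^ (2 * b) := by
  obtain ⟨n, hn⟩ : ∃ n, 2 * b = n + 1 := ⟨2 * b - 1, by omega⟩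
  set w : ℕ → ℝ := fun j => (1 / (N : ℝ)) * ‖dirichlet ⌊X⌋ (-((j : ℝ) / N))‖ with hw
  have hw0 : ∀ j, 0 ≤ w j := fun j => by simp only [hw]; positivity
  let S : ℕ → (Fin d → ℝ) → ℝ := fun j α => ‖∑ x ∈ Finset.Icc (1 : ℤ) N,
        e ((∑ i, α i * ((x - h : ℤ) : ℝ) ^ (i.1 + 1)) + θ * ((x - h : ℤ) : ℝ) ^ (d + 2))
          * e ((j : ℝ) / N * ((x - h : ℤ) : ℝ))‖
  have hS : ∀ j, Continuous (S j) := fun j => by simp only [S]; fun_prop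
  have hpt : ∀ α, ‖shortSum d α θ X‖ ^ (2 * b) ≤
      (∑ j ∈ Finset.range N, w j) ^ n * ∑ j ∈ Finset.range N, w j * S j α ^ (2 * b) := by
    intro α
    have hg : ‖shortSum d α θ X‖ ≤ ∑ j ∈ Finset.range N, w j * S j α := by
      unfold shortSum
      rw [sum_shift_eq (fun z => e ((∑ i, α i * (z : ℝ) ^ (i.1 + 1)) + θ * (z : ℝ) ^ (d + 2)))
        N hN ⌊X⌋ h h1 h2]
      refine (norm_sum_le _ _).trans (le_of_eq (Finset.sum_congr rfl fun j _ => ?_))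
      rw [norm_mul, norm_mul, norm_div, norm_one, Complex.norm_natCast]
    rw [hn]
    exact (pow_le_pow_left₀ (norm_nonneg _) hg _).trans
      (pow_sum_le _ _ _ (fun j _ => hw0 j) (fun j _ => norm_nonneg _) n)
  have hcg : Continuous fun α : Fin d → ℝ => shortSum d α θ X :=
    (continuous_shortSum d X).comp (Continuous.prodMk continuous_id continuous_const)
  have hcomp : IsCompact (Set.Icc (0 : Fin d → ℝ) 1) := isCompact_Icc
  have hint : ∀ j, IntegrableOn (fun α => w j * S j α ^ (2 * b)) (Set.Icc (0 : Fin d → ℝ) 1) :=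
    fun j => ((continuous_const.mul ((hS j).pow _)).continuousOn).integrableOn_compact hcomp
  calc _ ≤ ∫ α in Set.Icc (0 : Fin d → ℝ) 1,
        (∑ j ∈ Finset.range N, w j) ^ n * ∑ j ∈ Finset.range N, w j * S j α ^ (2 * b) := by
        refine setIntegral_mono ((hcg.norm.pow _).continuousOn.integrableOn_compact hcomp) ?_ hpt
        exact (integrable_finsetSum _ fun j _ => hint j).const_mul _
    _ = (∑ j ∈ Finset.range N, w j) ^ n * ∑ j ∈ Finset.range N, w j *
          ∫ α in Set.Icc (0 : Fin d → ℝ) 1, ‖fullSum d N α (-((d + 2) * θ * h)) θ‖ ^ (2 * b) := by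
        rw [integral_const_mul, integral_finsetSum _ fun j _ => hint j]
        congr 1
        refine Finset.sum_congr rfl fun j _ => ?_
        rw [integral_const_mul, ← integral_shift d hd N h ((j : ℝ) / N) θ b]
    _ = _ := by
        rw [← Finset.sum_mul, hn, pow_succ]
        exact (mul_assoc _ _ _).symm

/-- The averaging step: for fixed `α` and `θ`, the values at the points `-(d+2)θ(y+H)` of a
nonnegative trigonometric polynomial are bounded on average by its mean times `ψ*`. -/
lemma sum_fullSum_le (d b : ℕ) (θ : ℝ) {X : ℝ} (hX : 1 ≤ X) (N : ℕ)
    (hN : (N : ℝ) ≤ 5 * X) (α : Fin d → ℝ) :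
    ∑ y ∈ Finset.Icc (1 : ℤ) ⌊X⌋,
        ‖fullSum d N α (-((d + 2) * θ * ((y + ⌊X⌋ : ℤ) : ℝ))) θ‖ ^ (2 * b) ≤
      (4 * b * 5 ^ (d + 1) + 1) * X * psiKstar (d + 2) θ X *
        ∫ s in (0 : ℝ)..1, ‖fullSum d N α s θ‖ ^ (2 * b) := by
  have hX0 : 0 < X := by linarith
  set T : ℝ → ℝ := fun s => ‖fullSum d N α s θ‖ ^ (2 * b) with hT
  -- `T` is a trigonometric polynomial of degree at most `M`, and `2M + 1 ≤ C0 * X^(d+1)`.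
  set M : ℤ := 2 * b * (N : ℤ) ^ (d + 1) with hM
  have hM0 : 0 ≤ M := by positivity
  set C0 : ℝ := 4 * b * 5 ^ (d + 1) + 1 with hC0
  have hC1 : 1 ≤ C0 := by
    have : (0 : ℝ) ≤ 4 * b * 5 ^ (d + 1) := by positivity
    linarith
  have hMX : 2 * (M : ℝ) + 1 ≤ C0 * X ^ (d + 1) := by
    have h1 : (N : ℝ) ^ (d + 1) ≤ 5 ^ (d + 1) * X ^ (d + 1) := by
      rw [← mul_pow]; exact pow_le_pow_left₀ (by positivity) hN _
    have h2 : (1 : ℝ) ≤ X ^ (d + 1) := one_le_pow₀ hX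
    rw [hM, hC0]
    push_cast
    have h3 := mul_le_mul_of_nonneg_left h1 (show (0 : ℝ) ≤ 4 * b by positivity)
    calc _ = 4 * b * (N : ℝ) ^ (d + 1) + 1 := by ring
      _ ≤ 4 * b * (5 ^ (d + 1) * X ^ (d + 1)) + X ^ (d + 1) := add_le_add h3 h2
      _ = _ := by ring
  have hTc : Continuous T := by
    have : Continuous fun s : ℝ => fullSum d N α s θ := by unfold fullSum; fun_prop
    exact this.norm.pow _
  have hTp : IsTrigPoly M (fun t => (T t : ℂ)) := by
    have := isTrigPoly_norm_pow N
      (fun x => e ((∑ i, α i * (x : ℝ) ^ (i.1 + 1)) + θ * (x : ℝ) ^ (d + 2))) (d + 1) b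
    convert this using 6 with t
    unfold fullSum
    refine Finset.sum_congr rfl fun x _ => ?_
    rw [← e_add]
    congr 1
    ring
  have hT0 : ∀ t, 0 ≤ T t := fun t => by simp only [hT]; positivity
  have hDc : ∀ t : ℝ, Continuous fun s => T s * ‖dirichlet M (s - t)‖ := fun t =>
    hTc.mul ((continuous_dirichlet M).comp (continuous_id.sub continuous_const)).norm
  calc _ ≤ ∑ y ∈ Finset.Icc (1 : ℤ) ⌊X⌋, ∫ s in (0 : ℝ)..1,
        T s * ‖dirichlet M (s - (-((d + 2) * θ * ((y + ⌊X⌋ : ℤ) : ℝ))))‖ :=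
        Finset.sum_le_sum fun y _ => norm_le_integral_of_isTrigPoly hT0 hTp _
    _ = ∫ s in (0 : ℝ)..1, ∑ y ∈ Finset.Icc (1 : ℤ) ⌊X⌋,
        T s * ‖dirichlet M (s - (-((d + 2) * θ * ((y + ⌊X⌋ : ℤ) : ℝ))))‖ :=
        (intervalIntegral.integral_finsetSum fun y _ =>
          (hDc _).intervalIntegrable _ _).symm
    _ ≤ ∫ s in (0 : ℝ)..1, C0 * X * psiKstar (d + 2) θ X * T s := by
        refine intervalIntegral.integral_mono zero_le_one
          ((continuous_finsetSum _ fun y _ => hDc _).intervalIntegrable _ _)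
          ((continuous_const.mul hTc).intervalIntegrable _ _) fun s => ?_
        simp only
        rw [← Finset.mul_sum, mul_comm]
        refine mul_le_mul_of_nonneg_right ?_ (hT0 s)
        -- the fixed part `(d+2)θ⌊X⌋` of the translation is absorbed in the supremum over `μ`
        have h1 := psiK_le_psiKstar d θ (s + (d + 2) * θ * ⌊X⌋) hX
        rw [psiK_eq, one_div, inv_mul_le_iff₀ hX0] at h1
        rw [mul_assoc]
        refine le_trans ?_ (mul_le_mul_of_nonneg_left h1 (by linarith))
        rw [Finset.mul_sum]
        refine Finset.sum_le_sum fun y _ => ?_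
        have h2 := norm_dirichlet_le_truncRecip hM0 hC1 hMX
          (s - (-((d + 2) * θ * ((y + ⌊X⌋ : ℤ) : ℝ))))
        rw [show s - (-((d + 2) * θ * ((y + ⌊X⌋ : ℤ) : ℝ)))
          = (d + 2) * θ * y + (s + (d + 2) * θ * ⌊X⌋) by push_cast; ring] at h2 ⊢
        exact h2
    _ = _ := by rw [intervalIntegral.integral_const_mul]

lemma three_add_log_le {X : ℝ} (hX : 1 ≤ X) {N : ℕ} (hN0 : 0 < N) (hN : (N : ℝ) ≤ 5 * X) :
    3 + 2 * Real.log N ≤ 7 * Real.log (4 * X) := by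
  have h4 : 1 ≤ Real.log (4 * X) := by
    rw [Real.le_log_iff_exp_le (by linarith)]
    have := Real.exp_one_lt_d9
    linarith
  have h5 : Real.log N ≤ 2 * Real.log (4 * X) := by
    rw [← Real.log_rpow (by linarith)]
    refine Real.log_le_log (by exact_mod_cast hN0) (hN.trans ?_)
    norm_num
    nlinarith
  linarith

/-- The bound for fixed `θ`, obtained by averaging `integral_shortSum_le` over the translations
`h = y + ⌊X⌋` with `1 ≤ y ≤ X`. The factor `2` pays for replacing `X` by `⌊X⌋`. -/
lemma integral_shortSum_le_main (d : ℕ) (hd : 1 ≤ d) (b : ℕ) (hb : 1 ≤ b) (θ : ℝ) {X : ℝ}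
    (hX : 1 ≤ X) :
    ∫ α in Set.Icc (0 : Fin d → ℝ) 1, ‖shortSum d α θ X‖ ^ (2 * b) ≤
      (2 * (4 * b * 5 ^ (d + 1) + 1) * 7 ^ (2 * b)) * Real.log (4 * X) ^ (2 * b) *
        psiKstar (d + 2) θ X *
        ∫ α in Set.Icc (0 : Fin d → ℝ) 1, ∫ s in (0 : ℝ)..1,
          ‖fullSum d ⌊4 * X + 1⌋ α s θ‖ ^ (2 * b) := by
  have hH1 : 1 ≤ ⌊X⌋ := Int.le_floor.2 (by exact_mod_cast hX)
  have hHX : (⌊X⌋ : ℝ) ≤ X := Int.floor_le X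
  have hXH : X ≤ 2 * (⌊X⌋ : ℝ) := by
    have := Int.lt_floor_add_one X
    have h1 : (1 : ℝ) ≤ ⌊X⌋ := by exact_mod_cast hH1
    linarith
  have hNH : 4 * ⌊X⌋ + 1 ≤ ⌊4 * X + 1⌋ := Int.le_floor.2 (by push_cast; linarith)
  obtain ⟨N, hN⟩ : ∃ N : ℕ, (N : ℤ) = ⌊4 * X + 1⌋ := ⟨_, Int.toNat_of_nonneg (by omega)⟩
  have hN5 : (N : ℝ) ≤ 5 * X := by
    have h1 := Int.floor_le (4 * X + 1)
    rw [← hN] at h1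
    push_cast at h1
    linarith
  have hN0 : 0 < N := by omega
  rw [← hN] at hNH ⊢
  set W := ∑ j ∈ Finset.range N, (1 / (N : ℝ)) * ‖dirichlet ⌊X⌋ (-((j : ℝ) / N))‖ with hWdef
  have hW0 : 0 ≤ W := Finset.sum_nonneg fun j _ => by positivity
  have hW : W ≤ 7 * Real.log (4 * X) :=
    (sum_norm_dirichlet_le N hN0 ⌊X⌋ (by omega) (by omega)).trans (three_add_log_le hX hN0 hN5)
  set I := ∫ α in Set.Icc (0 : Fin d → ℝ) 1, ‖shortSum d α θ X‖ ^ (2 * b)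
  set K := ∫ α in Set.Icc (0 : Fin d → ℝ) 1, ∫ s in (0 : ℝ)..1, ‖fullSum d N α s θ‖ ^ (2 * b)
    with hK
  have hK0 : 0 ≤ K := by
    refine integral_nonneg fun α => ?_
    exact intervalIntegral.integral_nonneg zero_le_one fun s _ => by positivity
  have hcomp : IsCompact (Set.Icc (0 : Fin d → ℝ) 1) := isCompact_Icc
  set C0 : ℝ := 4 * b * 5 ^ (d + 1) + 1 with hC0
  have hC00 : 0 ≤ C0 := by positivity
  have hψ := psiKstar_nonneg d θ hX
  have hcf : ∀ t : ℝ, Continuous fun α : Fin d → ℝ => ‖fullSum d N α t θ‖ ^ (2 * b) := by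
    intro t
    unfold fullSum
    fun_prop
  have hc2 : Continuous fun α : Fin d → ℝ =>
      ∫ s in (0 : ℝ)..1, ‖fullSum d N α s θ‖ ^ (2 * b) := by
    refine intervalIntegral.continuous_parametric_intervalIntegral_of_continuous' ?_ 0 1
    unfold fullSum
    simp only [Function.uncurry_def]
    fun_prop
  have hcard : ((Finset.Icc (1 : ℤ) ⌊X⌋).card : ℝ) = ⌊X⌋ := by
    have : ((Finset.Icc (1 : ℤ) ⌊X⌋).card : ℤ) = ⌊X⌋ := by rw [Int.card_Icc]; omega
    exact_mod_cast this
  have h1 : (⌊X⌋ : ℝ) * I ≤ W ^ (2 * b) * (C0 * X * psiKstar (d + 2) θ X * K) := by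
    calc (⌊X⌋ : ℝ) * I = ∑ y ∈ Finset.Icc (1 : ℤ) ⌊X⌋, I := by
          rw [Finset.sum_const, nsmul_eq_mul, hcard]
      _ ≤ ∑ y ∈ Finset.Icc (1 : ℤ) ⌊X⌋, W ^ (2 * b) * ∫ α in Set.Icc (0 : Fin d → ℝ) 1,
            ‖fullSum d N α (-((d + 2) * θ * ((y + ⌊X⌋ : ℤ) : ℝ))) θ‖ ^ (2 * b) := by
          refine Finset.sum_le_sum fun y hy => ?_
          rw [Finset.mem_Icc] at hy
          exact integral_shortSum_le d hd b hb X θ N hN0 (y + ⌊X⌋) (by omega) (by omega)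
      _ = W ^ (2 * b) * ∫ α in Set.Icc (0 : Fin d → ℝ) 1, ∑ y ∈ Finset.Icc (1 : ℤ) ⌊X⌋,
            ‖fullSum d N α (-((d + 2) * θ * ((y + ⌊X⌋ : ℤ) : ℝ))) θ‖ ^ (2 * b) := by
          rw [← Finset.mul_sum, integral_finsetSum]
          exact fun y _ => (hcf _).continuousOn.integrableOn_compact hcomp
      _ ≤ W ^ (2 * b) * ∫ α in Set.Icc (0 : Fin d → ℝ) 1, C0 * X * psiKstar (d + 2) θ X *
            ∫ s in (0 : ℝ)..1, ‖fullSum d N α s θ‖ ^ (2 * b) := by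
          refine mul_le_mul_of_nonneg_left ?_ (by positivity)
          refine setIntegral_mono
            ((continuous_finsetSum _ fun y _ => hcf _).continuousOn.integrableOn_compact hcomp)
            ((continuous_const.mul hc2).continuousOn.integrableOn_compact hcomp) fun α => ?_
          exact sum_fullSum_le d b θ hX N hN5 α
      _ = _ := by rw [integral_const_mul]
  have h2 : (⌊X⌋ : ℝ) * I ≤ ⌊X⌋ * (2 * C0 * 7 ^ (2 * b) * Real.log (4 * X) ^ (2 * b) *
        psiKstar (d + 2) θ X * K) := by
    refine h1.trans ?_
    have h3 : W ^ (2 * b) ≤ 7 ^ (2 * b) * Real.log (4 * X) ^ (2 * b) := by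
      rw [← mul_pow]; exact pow_le_pow_left₀ hW0 hW _
    have hlog : 0 ≤ Real.log (4 * X) := Real.log_nonneg (by linarith)
    calc _ ≤ (7 ^ (2 * b) * Real.log (4 * X) ^ (2 * b)) *
          (C0 * (2 * ⌊X⌋) * psiKstar (d + 2) θ X * K) := by gcongr
      _ = _ := by ring
  exact le_of_mul_le_mul_left h2 (by exact_mod_cast hH1)

/-! ### Integration over `θ` -/

lemma integral_cube_succ (n : ℕ) (f : (Fin (n + 1) → ℝ) → ℝ) :
    ∫ β in Set.Icc (0 : Fin (n + 1) → ℝ) 1, f β =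
      ∫ p in Set.Icc (0 : ℝ) 1 ×ˢ Set.Icc (0 : Fin n → ℝ) 1,
        f (Fin.snoc (α := fun _ => ℝ) p.2 p.1) := by
  have hmp := (volume_preserving_piFinSuccAbove (fun _ : Fin (n + 1) => ℝ) (Fin.last n)).symm
  rw [← hmp.setIntegral_preimage_emb (MeasurableEquiv.measurableEmbedding _)]
  have hfun : ∀ p : ℝ × (Fin n → ℝ),
      (MeasurableEquiv.piFinSuccAbove (fun _ : Fin (n + 1) => ℝ) (Fin.last n)).symm p
        = Fin.snoc (α := fun _ => ℝ) p.2 p.1 := by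
    intro p
    rw [← Fin.insertNth_last']
    rfl
  have hset : (MeasurableEquiv.piFinSuccAbove (fun _ : Fin (n + 1) => ℝ) (Fin.last n)).symm ⁻¹'
      Set.Icc (0 : Fin (n + 1) → ℝ) 1 = Set.Icc (0 : ℝ) 1 ×ˢ Set.Icc (0 : Fin n → ℝ) 1 := by
    ext p
    simp only [Set.mem_preimage, hfun, Set.mem_Icc, Set.mem_prod, Pi.le_def, Fin.forall_fin_succ',
      Fin.snoc_castSucc, Fin.snoc_last, Pi.zero_apply, Pi.one_apply]
    tauto
  rw [hset]
  simp_rw [hfun]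

lemma continuous_snoc (n : ℕ) :
    Continuous fun p : ℝ × (Fin n → ℝ) => (Fin.snoc (α := fun _ => ℝ) p.2 p.1 : Fin (n + 1) → ℝ) := by
  refine continuous_pi fun i => ?_
  refine Fin.lastCases ?_ (fun i => ?_) i
  · simp only [Fin.snoc_last]; fun_prop
  · simp only [Fin.snoc_castSucc]; fun_prop

/-- The Vinogradov mean value as an iterated integral, with the two leading coefficients singled
out. -/
lemma J_eq (d b : ℕ) (Y : ℝ) : J b (d + 2) Y =
    ∫ θ in (0 : ℝ)..1, ∫ α in Set.Icc (0 : Fin d → ℝ) 1, ∫ s in (0 : ℝ)..1,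
      ‖fullSum d ⌊Y⌋ α s θ‖ ^ (2 * b) := by
  let F : (Fin (d + 2) → ℝ) → ℝ := fun β =>
    ‖∑ x ∈ Finset.Icc (1 : ℤ) ⌊Y⌋, e (∑ i : Fin (d + 2), β i * (x : ℝ) ^ (i.1 + 1))‖ ^ (2 * b)
  have hF : Continuous F := by simp only [F]; fun_prop
  have hF2 : ∀ (α : Fin d → ℝ) (s θ : ℝ), F (Fin.snoc (α := fun _ => ℝ)
      (Fin.snoc (α := fun _ => ℝ) α s : Fin (d + 1) → ℝ) θ) = ‖fullSum d ⌊Y⌋ α s θ‖ ^ (2 * b) := by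
    intro α s θ
    simp only [F, fullSum]
    congr 2
    refine Finset.sum_congr rfl fun x _ => ?_
    rw [Fin.sum_univ_castSucc, Fin.sum_univ_castSucc]
    simp only [Fin.snoc_castSucc, Fin.snoc_last, Fin.val_castSucc, Fin.val_last]
  have hcomp : ∀ n, IsCompact (Set.Icc (0 : Fin n → ℝ) 1) := fun n => isCompact_Icc
  have hI : IsCompact (Set.Icc (0 : ℝ) 1) := isCompact_Icc
  change ∫ β in Set.Icc (0 : Fin (d + 1 + 1) → ℝ) 1, F β = _
  rw [integral_cube_succ, Measure.volume_eq_prod, setIntegral_prod,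
    intervalIntegral.integral_of_le zero_le_one, integral_Icc_eq_integral_Ioc]
  · refine setIntegral_congr_fun measurableSet_Ioc fun θ _ => ?_
    simp only
    rw [integral_cube_succ, Measure.volume_eq_prod]
    simp_rw [hF2]
    rw [← setIntegral_prod_swap, setIntegral_prod]
    · refine setIntegral_congr_fun measurableSet_Icc fun α _ => ?_
      simp only [Prod.fst_swap, Prod.snd_swap]
      rw [intervalIntegral.integral_of_le zero_le_one, integral_Icc_eq_integral_Ioc]
    · refine ContinuousOn.integrableOn_compact ((hcomp d).prod hI) (Continuous.continuousOn ?_)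
      unfold fullSum
      simp only [Prod.fst_swap, Prod.snd_swap]
      fun_prop
  · exact ((hF.comp (continuous_snoc (d + 1))).continuousOn).integrableOn_compact
      (hI.prod (hcomp (d + 1)))

lemma fullSum_add_one (d : ℕ) (N : ℤ) (α : Fin d → ℝ) (s θ : ℝ) :
    fullSum d N α s (θ + 1) = fullSum d N α s θ := by
  unfold fullSum
  refine Finset.sum_congr rfl fun x _ => ?_
  rw [← e_add_int ((∑ i, α i * (x : ℝ) ^ (i.1 + 1)) + s * (x : ℝ) ^ (d + 1)
    + θ * (x : ℝ) ^ (d + 2)) (x ^ (d + 2))]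
  congr 1
  push_cast
  ring

/-- A bound for the fibres over `A`, integrated and completed to the period containing `A`. -/
lemma setIntegral_prod_le (d : ℕ) (G : (Fin d → ℝ) × ℝ → ℝ) (hG : Continuous G) (K : ℝ → ℝ)
    (hK : Continuous K) (hK0 : ∀ θ, 0 ≤ K θ) (D : ℝ) (hD : 0 ≤ D) (c : ℝ)
    (A : Set ℝ) (hA : MeasurableSet A) (hAc : A ⊆ Set.Icc c (c + 1))
    (hle : ∀ θ ∈ A, ∫ α in Set.Icc (0 : Fin d → ℝ) 1, G (α, θ) ≤ D * K θ) :
    ∫ p in (Set.Icc (0 : Fin d → ℝ) 1) ×ˢ A, G p ≤ D * ∫ θ in Set.Icc c (c + 1), K θ := by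
  have hcomp : IsCompact (Set.Icc (0 : Fin d → ℝ) 1) := isCompact_Icc
  have hGs : Continuous fun q : ℝ × (Fin d → ℝ) => G (q.2, q.1) := hG.comp continuous_swap
  have hGI : Continuous fun θ : ℝ => ∫ α in Set.Icc (0 : Fin d → ℝ) 1, G (α, θ) :=
    continuous_parametric_integral_of_continuous
      (f := fun (θ : ℝ) (α : Fin d → ℝ) => G (α, θ)) hGs hcomp
  have hint : IntegrableOn (fun q : ℝ × (Fin d → ℝ) => G q.swap)
      (A ×ˢ Set.Icc (0 : Fin d → ℝ) 1) (volume.prod volume) :=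
    IntegrableOn.mono_set
      (hGs.continuousOn.integrableOn_compact
        ((isCompact_Icc (a := c) (b := c + 1)).prod hcomp))
      (Set.prod_mono hAc subset_rfl)
  rw [Measure.volume_eq_prod, ← setIntegral_prod_swap, setIntegral_prod _ hint]
  calc _ ≤ ∫ θ in A, D * K θ :=
        setIntegral_mono_on
          ((hGI.continuousOn.integrableOn_compact isCompact_Icc).mono_set hAc)
          (((continuous_const.mul hK).continuousOn.integrableOn_compact
            isCompact_Icc).mono_set hAc) hA hle
    _ = D * ∫ θ in A, K θ := integral_const_mul _ _
    _ ≤ _ := mul_le_mul_of_nonneg_left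
        (setIntegral_mono_set (hK.continuousOn.integrableOn_compact isCompact_Icc)
          (Filter.Eventually.of_forall hK0) hAc.eventuallyLE) hD

/-- The main bound with `k = d + 2` and an explicit constant: the bound for fixed `θ`, integrated
over `A`, is completed to a full period of `θ`. -/
lemma setIntegral_shortSum_le (d b : ℕ) (hd : 1 ≤ d) (hb : 1 ≤ b) {X : ℝ} (hX : 1 ≤ X) (c : ℝ)
    (A : Set ℝ) (hA : MeasurableSet A) (hAc : A ⊆ Set.Icc c (c + 1)) :
    (∫ p : (Fin d → ℝ) × ℝ in (Set.Icc 0 1) ×ˢ A, ‖shortSum d p.1 p.2 X‖ ^ (2 * b)) ≤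
      2 * (4 * b * 5 ^ (d + 1) + 1) * 7 ^ (2 * b) * (Real.log (4 * X)) ^ (2 * b) *
        (⨆ θ ∈ A, psiKstar (d + 2) θ X) * J b (d + 2) (4 * X + 1) := by
  set C : ℝ := 2 * (4 * b * 5 ^ (d + 1) + 1) * 7 ^ (2 * b) with hC
  have hC0 : 0 ≤ C := by positivity
  have hlog : 0 ≤ Real.log (4 * X) := Real.log_nonneg (by linarith)
  set Ψ := ⨆ θ ∈ A, psiKstar (d + 2) θ X with hΨ
  have hΨ0 : 0 ≤ Ψ := Real.iSup_nonneg fun θ => Real.iSup_nonneg fun _ => psiKstar_nonneg d θ hX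
  set Kf : ℝ → ℝ := fun θ => ∫ α in Set.Icc (0 : Fin d → ℝ) 1, ∫ s in (0 : ℝ)..1,
      ‖fullSum d ⌊4 * X + 1⌋ α s θ‖ ^ (2 * b) with hKf
  have hcomp : IsCompact (Set.Icc (0 : Fin d → ℝ) 1) := isCompact_Icc
  have hKc : Continuous Kf := by
    refine continuous_parametric_integral_of_continuous
      (f := fun (θ : ℝ) (α : Fin d → ℝ) => ∫ s in (0 : ℝ)..1,
        ‖fullSum d ⌊4 * X + 1⌋ α s θ‖ ^ (2 * b)) ?_ hcomp
    refine intervalIntegral.continuous_parametric_intervalIntegral_of_continuous'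
      (f := fun (p : ℝ × (Fin d → ℝ)) (s : ℝ) => ‖fullSum d ⌊4 * X + 1⌋ p.2 s p.1‖ ^ (2 * b)) ?_ 0 1
    unfold fullSum
    simp only [Function.uncurry_def]
    fun_prop
  have hK0 : ∀ θ, 0 ≤ Kf θ := fun θ => integral_nonneg fun α =>
    intervalIntegral.integral_nonneg zero_le_one fun s _ => by positivity
  have hgc : Continuous fun p : (Fin d → ℝ) × ℝ => ‖shortSum d p.1 p.2 X‖ ^ (2 * b) :=
    (continuous_shortSum d X).norm.pow _
  have hper : Function.Periodic Kf 1 := fun θ => by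
    simp only [hKf, fullSum_add_one]
  have hJ : J b (d + 2) (4 * X + 1) = ∫ θ in Set.Icc c (c + 1), Kf θ := by
    rw [J_eq, integral_Icc_eq_integral_Ioc, ← intervalIntegral.integral_of_le (by linarith),
      hper.intervalIntegral_add_eq c 0, zero_add]
  rw [hJ]
  refine setIntegral_prod_le d _ hgc Kf hKc hK0 _ (by positivity) c A hA hAc fun θ hθ => ?_
  refine (integral_shortSum_le_main d hd b hb θ hX).trans ?_
  refine mul_le_mul_of_nonneg_right ?_ (hK0 θ)
  exact mul_le_mul_of_nonneg_left (psiKstar_le_iSup d hX A hθ) (by positivity)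

theorem stmt3 (k b : ℕ) (hk : 3 ≤ k) (hb : 1 ≤ b) :
    ∃ C : ℝ, ∀ X : ℝ, 1 ≤ X → ∀ c : ℝ, ∀ A : Set ℝ, MeasurableSet A →
      A ⊆ Set.Icc c (c + 1) →
      (∫ p : (Fin (k - 2) → ℝ) × ℝ in (Set.Icc 0 1) ×ˢ A, ‖gK k p.1 p.2 X‖ ^ (2 * b)) ≤
        C * (Real.log (4 * X)) ^ (2 * b) * (⨆ θ ∈ A, psiKstar k θ X) *
          J b k (4 * X + 1) := by
  obtain ⟨d, rfl⟩ : ∃ d, k = d + 2 := ⟨k - 2, by omega⟩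
  have hd : 1 ≤ d := by omega
  refine ⟨2 * (4 * b * 5 ^ (d + 1) + 1) * 7 ^ (2 * b), fun X hX c A hA hAc => ?_⟩
  exact setIntegral_shortSum_le d b hd hb hX c A hA hAc
end

section
/- Let k ≥ 2 and ε > 0 be fixed. Let q ≥ 1 and a = (a_1,…,a_k) ∈ ℤ^k with gcd(a_1,…,a_k,q) = 1, and let w ∈ ℤ^k with w_j ≠ 0 for each j. Then Σ_{r=1}^q e(P_k(a ⊗ w; r)/q) ≪_{ε,k} (∏_{j=1}^k |w_j|)^{1/k} · q^{1 − 1/k + ε}, where a ⊗ w = (a_1 w_1,…,a_k w_k). -/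
/-!
The heart of the matter is Hua's bound: if `f` has degree at most `k` and is not constant modulo
any prime dividing `n`, then `∑_{x mod n} e (f x / n) ≪ n ^ (1 - 1 / k + ε)`
(`exists_norm_expSum_le`). The weighted sum reduces to it as follows. Let `g` be the gcd of `q` and
all the `a_i w_i`. Since `g` divides `a_i ∏ w_j` for all `i` as well as `q ∏ w_j`, it divides
`∏ w_j` by coprimality, so `g ≤ ∏ |w_j|`. The sum equals `g` times a sum modulo `q / g` to which
Hua's bound applies, and `g (q / g) ^ (1 - 1 / k + ε) ≤ g ^ (1 / k) q ^ (1 - 1 / k + ε)`.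

By the Chinese remainder theorem the sum modulo `n` is a product of sums modulo prime powers.
It is enough to bound each of these by `D (p ^ l) ^ (1 - 1 / k)` with `D` depending only on `k`,
because `D ^ ω(n) ≪ n ^ ε`.

For `l = 1` this is Mordell's argument (`norm_polySum_pow_le`). When `p > k`, Newton's identities
show that two `k`-tuples over `𝔽_p` with the same power sums of order `1, …, k` are rearrangements
of each other, so the `2k`-th moment of the sums over all coefficient vectors is at most
`k! p ^ (2 k)`. Affine substitutions produce at least `p (p - 1) / k` coefficient vectors whose
sums have the same absolute value as the given one.

For higher prime powers (`norm_expSum_prime_pow_le_aux`) write `f' = p ^ t h` with `h` nonzero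
modulo `p`. If `l ≥ 2 t + 2`, only residue classes of roots `r` of `h` modulo `p` contribute
(`classSum_eq_zero`). On such a class `f (r + p y) = f r + p ^ σ g y` with `1 ≤ σ ≤ k` and `g` again
not constant modulo `p`, so the class contributes `p ^ (σ - 1)` times a sum modulo `p ^ (l - σ)`.
The induction is controlled by the degree of `h` modulo `p`, which for `g` is at most the
multiplicity of the root `r`. If `l < 2 t + 2`, either `t = 0` and `l = 1`, or `p ^ l ≤ k ^ 3`.
-/

open Finset

/-- Integer version of `P_k(a; t) = ∑_{i=1}^k a_i t^i`. -/
def PkInt {k : ℕ} (a : Fin k → ℤ) (t : ℤ) : ℤ := ∑ i, a i * t ^ (i.1 + 1)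

section
open Polynomial

/-! ### Mordell's bound over a prime field -/

/-- Newton's identities recover the elementary symmetric functions from the power sums, because
the indices `1, …, k` are invertible modulo `p > k`. -/
lemma esymm_eq_of_power_sums_eq {p k : ℕ} [Fact p.Prime] (hkp : k < p) (x y : Fin k → ZMod p)
    (h : ∀ i : Fin k, ∑ j, x j ^ (i.1 + 1) = ∑ j, y j ^ (i.1 + 1)) (n : ℕ) (hn : n ≤ k) :
    (univ.val.map x).esymm n = (univ.val.map y).esymm n := by
  induction n using Nat.strong_induction_on with
  | _ n ih =>
    rcases Nat.eq_zero_or_pos n with rfl | hpos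
    · simp [Multiset.esymm]
    have newton := MvPolynomial.mul_esymm_eq_sum (Fin k) (ZMod p) n
    have hx := congrArg (MvPolynomial.aeval x) newton
    have hy := congrArg (MvPolynomial.aeval y) newton
    simp only [map_mul, map_sum, map_pow, map_neg, map_one, map_natCast, MvPolynomial.psum,
      MvPolynomial.aeval_X, MvPolynomial.aeval_esymm_eq_multiset_esymm] at hx hy
    have hn0 : (n : ZMod p) ≠ 0 := by
      rw [Ne, ZMod.natCast_eq_zero_iff]
      exact Nat.not_dvd_of_pos_of_lt hpos (by omega)
    apply mul_left_cancel₀ hn0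
    rw [hx, hy]
    congr 1
    apply sum_congr rfl
    rintro ⟨a, b⟩ hab
    simp only [mem_filter, HasAntidiagonal.mem_antidiagonal] at hab
    rw [ih a hab.2 (by omega)]
    congr 1
    have := h ⟨b - 1, by omega⟩
    have hb : b - 1 + 1 = b := by omega
    simpa only [hb] using this

lemma multiset_eq_of_power_sums_eq {p k : ℕ} [Fact p.Prime] (hkp : k < p) (x y : Fin k → ZMod p)
    (h : ∀ i : Fin k, ∑ j, x j ^ (i.1 + 1) = ∑ j, y j ^ (i.1 + 1)) :
    univ.val.map x = univ.val.map y := by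
  have key : ((univ.val.map x).map fun t => X - C t).prod
      = ((univ.val.map y).map fun t => X - C t).prod := by
    have hdeg : ∀ z : Fin k → ZMod p,
        ((univ.val.map z).map fun t => X - C t).prod.natDegree = k := by
      intro z
      rw [Polynomial.natDegree_multiset_prod_X_sub_C_eq_card]
      simp
    ext n
    by_cases hn : n ≤ k
    · rw [Multiset.prod_X_sub_C_coeff _ (by simpa using hn),
        Multiset.prod_X_sub_C_coeff _ (by simpa using hn)]
      simp only [Multiset.card_map, card_val, card_univ, Fintype.card_fin]
      rw [esymm_eq_of_power_sums_eq hkp x y h _ (by omega)]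
    · rw [coeff_eq_zero_of_natDegree_lt (by rw [hdeg]; omega),
        coeff_eq_zero_of_natDegree_lt (by rw [hdeg]; omega)]
  have := congrArg Polynomial.roots key
  rwa [Polynomial.roots_multiset_prod_X_sub_C, Polynomial.roots_multiset_prod_X_sub_C] at this

/-- Equal power sums force `y` to be a rearrangement of `x`, so at most `k!` such `y` exist. -/
lemma card_power_sums_eq_le {p k : ℕ} [Fact p.Prime] (hkp : k < p) (x : Fin k → ZMod p) :
    #{y : Fin k → ZMod p | ∀ i : Fin k, ∑ j, x j ^ (i.1 + 1) = ∑ j, y j ^ (i.1 + 1)}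
      ≤ k.factorial := by
  classical
  calc _ ≤ #((List.ofFn x).permutations.toFinset) := by
        apply card_le_card_of_injOn List.ofFn
        · intro y hy
          have hy' := multiset_eq_of_power_sums_eq hkp x y (by simpa using hy)
          have hl : ∀ z : Fin k → ZMod p, univ.val.map z = (List.ofFn z : Multiset (ZMod p)) := by
            intro z
            rw [Fin.univ_val_map]
          rw [hl, hl, Multiset.coe_eq_coe] at hy'
          simpa using hy'.symm
        · exact List.ofFn_injective.injOn
    _ ≤ _ := by
        refine (List.toFinset_card_le _).trans ?_
        simp [List.length_permutations]

lemma stdAddChar_sum {p : ℕ} [NeZero p] {ι : Type*} [Fintype ι] (v : ι → ZMod p) :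
    (ZMod.stdAddChar (∑ i, v i) : ℂ) = ∏ i, (ZMod.stdAddChar (v i) : ℂ) := by
  have := map_prod (ZMod.stdAddChar (N := p)).toMonoidHom
    (fun i => Multiplicative.ofAdd (v i)) univ
  rwa [← ofAdd_sum] at this

/-- The complete sum `∑ x, ψ (a₁ x + ⋯ + a_k x ^ k)` over `𝔽_p`, for the standard additive
character `ψ`; the coefficient of `x ^ (i + 1)` is `a i`. -/
noncomputable def fieldSum {p k : ℕ} [Fact p.Prime] (a : Fin k → ZMod p) : ℂ :=
  ∑ x : ZMod p, ZMod.stdAddChar (∑ i, a i * x ^ (i.1 + 1))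

lemma sum_stdAddChar_dot {p k : ℕ} [Fact p.Prime] (v : Fin k → ZMod p) :
    ∑ a : Fin k → ZMod p, (ZMod.stdAddChar (∑ i, a i * v i) : ℂ)
      = if v = 0 then (p : ℂ) ^ k else 0 := by
  have h1 : ∀ a : Fin k → ZMod p, (ZMod.stdAddChar (∑ i, a i * v i) : ℂ)
      = ∏ i, ZMod.stdAddChar (a i * v i) := fun a => stdAddChar_sum _
  simp_rw [h1]
  rw [← Fintype.piFinset_univ, ← Finset.prod_univ_sum (fun _ => univ)
    (fun i t => (ZMod.stdAddChar (t * v i) : ℂ))]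
  simp_rw [AddChar.sum_mulShift _ (ZMod.isPrimitive_stdAddChar p), ZMod.card]
  split_ifs with h
  · simp [h]
  · obtain ⟨i, hi⟩ : ∃ i, v i ≠ 0 := by
      by_contra! hc
      exact h (funext hc)
    exact prod_eq_zero (mem_univ i) (by simp [hi])

/-- The `2k`-th moment over all coefficient vectors is `p ^ k` times the number of solutions
of a Vinogradov system in `k + k` variables, of which only the diagonal ones exist. -/
lemma sum_norm_fieldSum_pow_le {p k : ℕ} [Fact p.Prime] (hkp : k < p) :
    ∑ a : Fin k → ZMod p, ‖fieldSum a‖ ^ (2 * k) ≤ (k.factorial : ℝ) * (p : ℝ) ^ (2 * k) := by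
  classical
  have expand : ∀ a : Fin k → ZMod p, ((‖fieldSum a‖ ^ (2 * k) : ℝ) : ℂ)
      = ∑ x : Fin k → ZMod p, ∑ y : Fin k → ZMod p, ZMod.stdAddChar
        (∑ i, a i * ((∑ j, x j ^ (i.1 + 1)) - ∑ j, y j ^ (i.1 + 1))) := by
    intro a
    have h1 : ((‖fieldSum a‖ ^ (2 * k) : ℝ) : ℂ)
        = fieldSum a ^ k * (starRingEnd ℂ (fieldSum a)) ^ k := by
      rw [← mul_pow, Complex.mul_conj, Complex.normSq_eq_norm_sq, pow_mul]
      push_cast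
      rfl
    rw [h1, fieldSum, map_sum]
    simp_rw [← AddChar.map_neg_eq_conj]
    rw [Fintype.sum_pow, Fintype.sum_pow, sum_mul_sum]
    refine sum_congr rfl fun x _ => sum_congr rfl fun y _ => ?_
    rw [← stdAddChar_sum, ← stdAddChar_sum, ← AddChar.map_add_eq_mul]
    congr 1
    rw [sum_neg_distrib, ← sub_eq_add_neg, sum_comm,
      sum_comm (s := univ) (t := univ) (f := fun j i => a i * y j ^ (i.1 + 1)),
      ← sum_sub_distrib]
    simp_rw [← mul_sum, ← mul_sub]
  have total : ((∑ a : Fin k → ZMod p, ‖fieldSum a‖ ^ (2 * k) : ℝ) : ℂ)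
      = ((∑ x : Fin k → ZMod p,
        #{y : Fin k → ZMod p | ∀ i : Fin k, ∑ j, x j ^ (i.1 + 1) = ∑ j, y j ^ (i.1 + 1)}
          * (p : ℝ) ^ k : ℝ) : ℂ) := by
    rw [Complex.ofReal_sum]
    simp_rw [expand]
    rw [sum_comm, Complex.ofReal_sum]
    refine sum_congr rfl fun x _ => ?_
    rw [sum_comm]
    simp_rw [sum_stdAddChar_dot]
    rw [sum_ite, sum_const_zero, add_zero, sum_const, nsmul_eq_mul]
    simp [funext_iff, sub_eq_zero]
  rw [Complex.ofReal_inj] at total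
  rw [total]
  calc _ ≤ ∑ x : Fin k → ZMod p, (k.factorial : ℝ) * (p : ℝ) ^ k := by
        gcongr with x _
        exact card_power_sums_eq_le hkp x
    _ = _ := by
        simp [ZMod.card]
        ring

/-- Mordell's bound. The substitutions `x ↦ u x + v` with `u ≠ 0` preserve the absolute value of
the sum, and at most `k` of them lead to the same coefficient vector, so the sum of `f` occurs at
least `p (p - 1) / k` times in the moment of `sum_norm_fieldSum_pow_le`. -/
lemma norm_polySum_pow_le {p k : ℕ} [Fact p.Prime] (hkp : k < p) (f : (ZMod p)[X])
    (hd : f.natDegree ≤ k) (hd1 : 1 ≤ f.natDegree) :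
    ‖∑ x : ZMod p, (ZMod.stdAddChar (f.eval x) : ℂ)‖ ^ (2 * k)
      ≤ 2 * k * k.factorial * (p : ℝ) ^ (2 * k - 2) := by
  classical
  have hp : p.Prime := Fact.out
  set d := f.natDegree with hdd
  have hf0 : f.leadingCoeff ≠ 0 := by
    rw [Ne, leadingCoeff_eq_zero]
    rintro rfl
    simp at hdd
    omega
  -- in degree one the sum vanishes; the count of substitutions needs degree at least two
  rcases hd1.eq_or_lt with h1 | h2
  · have : ∑ x : ZMod p, (ZMod.stdAddChar (f.eval x) : ℂ) = 0 := by
      have hc : f.coeff 1 ≠ 0 := by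
        rw [h1]
        exact hf0
      have hev : ∀ x, f.eval x = x * f.coeff 1 + f.coeff 0 := by
        intro x
        rw [eval_eq_sum_range' (n := 2) (by omega)]
        simp only [sum_range_succ, range_zero, sum_empty]
        ring
      have hev' : ∀ x, (ZMod.stdAddChar (f.eval x) : ℂ)
          = ZMod.stdAddChar (x * f.coeff 1) * ZMod.stdAddChar (f.coeff 0) := by
        intro x
        rw [hev, AddChar.map_add_eq_mul]
      simp_rw [hev']
      rw [← sum_mul, AddChar.sum_mulShift _ (ZMod.isPrimitive_stdAddChar p)]
      simp [hc]
    rw [this, norm_zero, zero_pow (by omega)]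
    positivity
  set S := ∑ x : ZMod p, (ZMod.stdAddChar (f.eval x) : ℂ) with hS
  -- the coefficients of `f (u * x + v)` in degrees `1, …, k`, for `z = (u, v)`
  let c : ZMod p × ZMod p → Fin k → ZMod p :=
    fun z i => (taylor z.2 f).coeff (i.1 + 1) * z.1 ^ (i.1 + 1)
  let s : Finset (ZMod p × ZMod p) := (univ.erase 0) ×ˢ univ
  have hnorm : ∀ z ∈ s, ‖fieldSum (c z)‖ = ‖S‖ := by
    rintro ⟨u, v⟩ hz
    have hu : u ≠ 0 := by simpa [s] using hz
    have hev : ∀ x, f.eval (u * x + v)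
        = (∑ i, c (u, v) i * x ^ (i.1 + 1)) + f.eval v := by
      intro x
      have h3 : f.eval (u * x + v) = (taylor v f).eval (u * x) := by
        rw [taylor_eval]
      rw [h3, eval_eq_sum_range' (n := k + 1) (by rw [natDegree_taylor]; omega),
        sum_range_succ', Finset.sum_range]
      simp [c, mul_pow, mul_assoc]
    have hbij : S = ∑ x : ZMod p, (ZMod.stdAddChar (f.eval (u * x + v)) : ℂ) := by
      symm
      refine Fintype.sum_bijective (fun x => u * x + v) ?_ _ _ (fun x => rfl)
      exact (Equiv.addRight v).bijective.comp (mulLeft_bijective₀ u hu)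
    rw [hbij]
    simp_rw [hev, AddChar.map_add_eq_mul]
    rw [← sum_mul, norm_mul]
    simp [fieldSum]
  have hfib : ∀ b : Fin k → ZMod p, #{z ∈ s | c z = b} ≤ k := by
    intro b
    by_cases hne : ({z ∈ s | c z = b} : Finset _).Nonempty
    swap
    · rw [not_nonempty_iff_eq_empty.1 hne]
      simp
    -- the leading coefficient determines `u ^ d`, the next one then determines `v`
    calc _ ≤ #((nthRoots d (b ⟨d - 1, by omega⟩ / f.leadingCoeff)).toFinset) := by
          apply card_le_card_of_injOn Prod.fst
          · rintro ⟨u, v⟩ hz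
            have hz' : c (u, v) = b := by
              have := (mem_filter.1 hz).2
              exact this
            simp only [Multiset.mem_toFinset, mem_coe]
            rw [mem_nthRoots (by omega), ← hz']
            have hd' : d - 1 + 1 = d := by omega
            simp only [c, hd']
            rw [hdd, coeff_taylor_natDegree]
            field_simp
          · rintro ⟨u, v⟩ hz ⟨u', v'⟩ hz' (rfl : u = u')
            have hu : u ≠ 0 := by
              have := (mem_filter.1 hz).1
              simpa [s] using this
            have hcc : c (u, v) = c (u, v') := by
              rw [(mem_filter.1 hz).2, (mem_filter.1 hz').2]
            have h5 := congrFun hcc ⟨d - 2, by omega⟩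
            have hd' : d - 2 + 1 = d - 1 := by omega
            simp only [c, hd'] at h5
            have h6 := mul_right_cancel₀ (pow_ne_zero _ hu) h5
            have h7 : ∀ r, (taylor r f).coeff (d - 1)
                = f.coeff (d - 1) + d * f.leadingCoeff * r := by
              intro r
              rw [taylor_coeff, eval_eq_sum_range' (n := 2)
                (by have := natDegree_hasseDeriv_le f (d - 1); omega)]
              simp only [sum_range_succ, hasseDeriv_coeff, range_zero, sum_empty]
              have h8 : 1 + (d - 1) = d := by omega
              have h9 : d.choose (d - 1) = d := by
                rw [Nat.choose_symm (by omega)]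
                simp
              simp [h8, h9, ← hdd, leadingCoeff]
            rw [h7, h7] at h6
            have hd0 : (d : ZMod p) ≠ 0 := by
              rw [Ne, ZMod.natCast_eq_zero_iff]
              exact Nat.not_dvd_of_pos_of_lt (by omega) (by omega)
            have h10 := mul_left_cancel₀ (mul_ne_zero hd0 hf0) (add_left_cancel h6)
            rw [h10]
      _ ≤ d := (Multiset.toFinset_card_le _).trans (card_nthRoots _ _)
      _ ≤ k := hd
  have hcard : (#s : ℝ) = (p - 1) * p := by
    have : #s = (p - 1) * p := by
      simp [s, card_product, card_erase_of_mem, ZMod.card]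
    rw [this]
    push_cast [hp.one_le]
    ring
  have hmain : ((p : ℝ) - 1) * p * ‖S‖ ^ (2 * k) ≤ k * (k.factorial * (p : ℝ) ^ (2 * k)) := by
    calc ((p : ℝ) - 1) * p * ‖S‖ ^ (2 * k) = ∑ z ∈ s, ‖fieldSum (c z)‖ ^ (2 * k) := by
          rw [sum_congr rfl fun z hz => by rw [hnorm z hz], sum_const, nsmul_eq_mul, hcard]
      _ = ∑ b, ∑ z ∈ s with c z = b, ‖fieldSum (c z)‖ ^ (2 * k) := (sum_fiberwise _ _ _).symm
      _ ≤ ∑ b : Fin k → ZMod p, (k : ℝ) * ‖fieldSum b‖ ^ (2 * k) := by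
          gcongr with b _
          rw [sum_congr rfl fun z hz => by rw [(mem_filter.1 hz).2], sum_const, nsmul_eq_mul]
          gcongr
          exact hfib b
      _ ≤ _ := by
          rw [← mul_sum]
          gcongr
          exact sum_norm_fieldSum_pow_le hkp
  have hp2 : (2 : ℝ) ≤ p := by exact_mod_cast hp.two_le
  have hpk : (p : ℝ) ^ (2 * k) = p ^ (2 * k - 2) * p ^ 2 := by
    rw [← pow_add]
    congr 1
    omega
  have hp3 : (p : ℝ) ^ 2 / 2 ≤ (p - 1) * p := by nlinarith
  have h11 : (p : ℝ) ^ 2 / 2 * ‖S‖ ^ (2 * k)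
      ≤ (p : ℝ) ^ 2 / 2 * (2 * k * k.factorial * (p : ℝ) ^ (2 * k - 2)) := by
    calc _ ≤ ((p : ℝ) - 1) * p * ‖S‖ ^ (2 * k) := by gcongr
      _ ≤ _ := hmain
      _ = _ := by
          rw [hpk]
          ring
  exact le_of_mul_le_mul_left h11 (by positivity)

/-! ### Sums of periodic functions and complete exponential sums -/

/-- The additive character `m ↦ e (m / n)` of level `n` on the integers. -/
noncomputable def ee (n : ℕ) (m : ℤ) : ℂ := e ((m : ℝ) / n)

lemma norm_ee (n : ℕ) (m : ℤ) : ‖ee n m‖ = 1 := by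
  rw [ee, e, Complex.norm_exp]
  simp

lemma ee_add (n : ℕ) (m m' : ℤ) : ee n (m + m') = ee n m * ee n m' := by
  rw [ee, ee, ee, e, e, e, ← Complex.exp_add]
  congr 1
  push_cast
  ring

lemma ee_eq_stdAddChar (n : ℕ) [NeZero n] (m : ℤ) :
    ee n m = ZMod.stdAddChar (m : ZMod n) := by
  rw [ZMod.stdAddChar_coe, ee, e]
  congr 1
  push_cast
  ring

lemma ee_congr {n : ℕ} (hn : n ≠ 0) {m m' : ℤ} (h : (n : ℤ) ∣ m' - m) : ee n m = ee n m' := by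
  have : NeZero n := ⟨hn⟩
  rw [ee_eq_stdAddChar, ee_eq_stdAddChar, (ZMod.intCast_eq_intCast_iff_dvd_sub _ _ _).2 h]

lemma ee_scale {c : ℕ} (hc : c ≠ 0) (n : ℕ) (m : ℤ) : ee (c * n) (c * m) = ee n m := by
  have : (c : ℝ) ≠ 0 := by exact_mod_cast hc
  rw [ee, ee]
  congr 1
  push_cast
  rw [mul_div_mul_left _ _ this]

lemma ee_eq_one_iff {n : ℕ} (hn : n ≠ 0) (m : ℤ) : ee n m = 1 ↔ (n : ℤ) ∣ m := by
  have : NeZero n := ⟨hn⟩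
  rw [ee_eq_stdAddChar, ← AddChar.map_zero_eq_one (ZMod.stdAddChar (N := n)),
    ZMod.injective_stdAddChar.eq_iff, ZMod.intCast_zmod_eq_zero_iff_dvd]

lemma periodic_eq_of_dvd {n : ℕ} {F : ℤ → ℂ} (hF : Function.Periodic F n) {x y : ℤ}
    (h : (n : ℤ) ∣ y - x) : F x = F y := by
  obtain ⟨c, hc⟩ := h
  have : y = x + c * n := by linarith
  rw [this]
  simpa using (hF.int_mul c x).symm

lemma sum_range_eq_sum_zmod {n : ℕ} [NeZero n] {F : ℤ → ℂ} :
    ∑ x ∈ range n, F x = ∑ z : ZMod n, F (z.val : ℤ) := by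
  refine sum_bij' (fun x _ => (x : ZMod n)) (fun z _ => z.val) ?_ ?_ ?_ ?_ ?_
  · simp
  · intro z _
    simpa using ZMod.val_lt z
  · intro x hx
    exact ZMod.val_cast_of_lt (by simpa using hx)
  · simp
  · intro x hx
    rw [ZMod.val_cast_of_lt (by simpa using hx)]

lemma sum_range_shift {n : ℕ} (hn : n ≠ 0) {F : ℤ → ℂ} (hF : Function.Periodic F n) (c : ℤ) :
    ∑ x ∈ range n, F (x + c) = ∑ x ∈ range n, F x := by
  have : NeZero n := ⟨hn⟩
  rw [sum_range_eq_sum_zmod (F := fun x => F (x + c)), sum_range_eq_sum_zmod]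
  refine Fintype.sum_equiv (Equiv.addRight (c : ZMod n)) _ _ fun z => ?_
  apply periodic_eq_of_dvd hF
  rw [← ZMod.intCast_eq_intCast_iff_dvd_sub]
  simp

/-- Splitting into residue classes modulo `m`. -/
lemma sum_range_mul (m n : ℕ) (F : ℤ → ℂ) :
    ∑ x ∈ range (m * n), F x = ∑ r ∈ range m, ∑ y ∈ range n, F (r + m * y) := by
  rw [sum_comm]
  induction n with
  | zero => simp
  | succ n ih =>
    rw [mul_add, mul_one, sum_range_add, ih, sum_range_succ]
    congr 1
    refine sum_congr rfl fun x _ => ?_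
    congr 1
    push_cast
    ring

lemma sum_range_mul_of_periodic (n c : ℕ) {F : ℤ → ℂ} (hF : Function.Periodic F n) :
    ∑ x ∈ range (n * c), F x = c * ∑ x ∈ range n, F x := by
  rw [sum_range_mul, mul_sum]
  refine sum_congr rfl fun x _ => ?_
  have h : ∀ y ∈ range c, F (x + n * y) = F x := fun y _ =>
    (periodic_eq_of_dvd hF ⟨y, by ring⟩).symm
  rw [sum_congr rfl h]
  simp

lemma sum_range_coprime {m n : ℕ} (hm : m ≠ 0) (hn : n ≠ 0) (h : m.Coprime n) {F G : ℤ → ℂ}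
    (hF : Function.Periodic F m) (hG : Function.Periodic G n) :
    ∑ x ∈ range (m * n), F x * G x = (∑ x ∈ range m, F x) * ∑ x ∈ range n, G x := by
  have : NeZero m := ⟨hm⟩
  have : NeZero n := ⟨hn⟩
  rw [sum_range_eq_sum_zmod (F := fun x => F x * G x), sum_range_eq_sum_zmod,
    sum_range_eq_sum_zmod, sum_mul_sum, ← Fintype.sum_prod_type']
  refine Fintype.sum_equiv (ZMod.chineseRemainder h).toEquiv _ _ fun z => ?_
  have h1 : (ZMod.chineseRemainder h z).1 = (z.val : ZMod m) := by
    conv_lhs => rw [← ZMod.natCast_zmod_val z, map_natCast]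
    rfl
  have h2 : (ZMod.chineseRemainder h z).2 = (z.val : ZMod n) := by
    conv_lhs => rw [← ZMod.natCast_zmod_val z, map_natCast]
    rfl
  congr 1
  · apply periodic_eq_of_dvd hF
    rw [← ZMod.intCast_eq_intCast_iff_dvd_sub]
    simp [h1]
  · apply periodic_eq_of_dvd hG
    rw [← ZMod.intCast_eq_intCast_iff_dvd_sub]
    simp [h2]

/-- The complete exponential sum `∑_{x mod n} e (f x / n)`. -/
noncomputable def expSum (n : ℕ) (f : ℤ[X]) : ℂ := ∑ x ∈ range n, ee n (f.eval (x : ℤ))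

lemma periodic_ee {n : ℕ} (hn : n ≠ 0) (f : ℤ[X]) :
    Function.Periodic (fun x : ℤ => ee n (f.eval x)) n := by
  intro x
  apply ee_congr hn
  have := f.sub_dvd_eval_sub x (x + n)
  rw [show x - (x + n) = -(n : ℤ) by ring, neg_dvd] at this
  exact this

lemma norm_expSum_le (n : ℕ) (f : ℤ[X]) : ‖expSum n f‖ ≤ n := by
  refine (norm_sum_le _ _).trans ?_
  simp [norm_ee]

/-! ### Polynomials modulo powers of a prime -/

/-- The polynomial `f` is not constant modulo `p`, as a formal polynomial. -/
def Admissible (p : ℕ) (f : ℤ[X]) : Prop := ∃ j, 1 ≤ j ∧ ¬ (p : ℤ) ∣ f.coeff j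

lemma coeff_map_zmod_eq_zero_iff (p : ℕ) (f : ℤ[X]) (j : ℕ) :
    (f.map (Int.castRingHom (ZMod p))).coeff j = 0 ↔ (p : ℤ) ∣ f.coeff j := by
  rw [coeff_map, eq_intCast, ZMod.intCast_zmod_eq_zero_iff_dvd]

/-- Extraction of the `p`-part of the content. -/
lemma exists_eq_C_pow_mul {p : ℕ} (hp : p.Prime) {g : ℤ[X]} (hg : g ≠ 0) :
    ∃ (t : ℕ) (h : ℤ[X]), g = C ((p : ℤ) ^ t) * h ∧ h.map (Int.castRingHom (ZMod p)) ≠ 0 := by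
  have hu : ¬ IsUnit (C (p : ℤ)) := by
    rw [isUnit_C]
    exact (Nat.prime_iff_prime_int.1 hp).not_isUnit
  obtain ⟨h, h1, h2⟩ :=
    (FiniteMultiplicity.of_not_isUnit hu hg).exists_eq_pow_mul_and_not_dvd
  refine ⟨_, h, by rw [C_pow]; exact h1, fun h0 => h2 ?_⟩
  rw [C_dvd_iff_dvd_coeff]
  intro i
  rw [← coeff_map_zmod_eq_zero_iff, h0, coeff_zero]

lemma Admissible.natDegree_pos {p : ℕ} {f : ℤ[X]} (h : Admissible p f) : 0 < f.natDegree := by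
  obtain ⟨j, hj, hd⟩ := h
  have : f.coeff j ≠ 0 := by
    intro h0
    simp [h0] at hd
  exact lt_of_lt_of_le hj (le_natDegree_of_ne_zero this)

lemma Admissible.derivative_ne_zero {p : ℕ} {f : ℤ[X]} (h : Admissible p f) :
    derivative f ≠ 0 := by
  intro h0
  have := h.natDegree_pos
  rw [Polynomial.derivative_eq_zero.1 h0] at this
  omega

lemma Admissible.taylor {p : ℕ} {f : ℤ[X]} (h : Admissible p f) (r : ℤ) :
    Admissible p (taylor r f) := by
  by_contra hc
  simp only [Admissible, not_exists, not_and, not_not] at hc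
  obtain ⟨j, hj, hd⟩ := h
  set φ := Int.castRingHom (ZMod p)
  have h1 : (Polynomial.taylor r f).map φ = C (((Polynomial.taylor r f).map φ).coeff 0) := by
    ext i
    rcases Nat.eq_zero_or_pos i with rfl | hi
    · simp
    · rw [(coeff_map_zmod_eq_zero_iff _ _ _).2 (hc i hi), coeff_C_of_ne_zero hi.ne']
  rw [map_taylor] at h1
  have h2 : f.map φ = C ((Polynomial.taylor (φ r) (f.map φ)).coeff 0) := by
    apply taylor_injective (φ r)
    rw [taylor_C]
    exact h1
  apply hd
  rw [← coeff_map_zmod_eq_zero_iff, h2, coeff_C_of_ne_zero (by omega)]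

/-- The power of `p` dividing the content of `f'` is bounded by the degree: it divides `j * a_j`,
hence `j`, for any index `j ≥ 1` with `p ∤ a_j`. -/
lemma Admissible.pow_le {p k t : ℕ} (hp : p.Prime) {f h : ℤ[X]} (hf : Admissible p f)
    (hk : f.natDegree ≤ k) (hd : derivative f = C ((p : ℤ) ^ t) * h) : p ^ t ≤ k := by
  obtain ⟨j, hj, hdv⟩ := hf
  have h1 := congrArg (fun g => g.coeff (j - 1)) hd
  simp only [coeff_derivative, coeff_C_mul] at h1
  rw [show j - 1 + 1 = j by omega] at h1
  have h2 : ((j - 1 : ℕ) : ℤ) + 1 = (j : ℤ) := by omega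
  rw [h2] at h1
  have hpi := Nat.prime_iff_prime_int.1 hp
  have h3 : (p : ℤ) ^ t ∣ (j : ℤ) :=
    hpi.pow_dvd_of_dvd_mul_left t hdv ⟨_, h1⟩
  have h4 : p ^ t ∣ j := by exact_mod_cast h3
  have h5 : f.coeff j ≠ 0 := by
    intro h0
    simp [h0] at hdv
  exact (Nat.le_of_dvd (by omega) h4).trans ((le_natDegree_of_ne_zero h5).trans hk)

/-- The polynomial `f (r + p X)`. -/
noncomputable def zoom (p : ℕ) (r : ℤ) (f : ℤ[X]) : ℤ[X] :=
  (taylor r f).comp (C (p : ℤ) * X)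

lemma zoom_coeff (p : ℕ) (r : ℤ) (f : ℤ[X]) (j : ℕ) :
    (zoom p r f).coeff j = (taylor r f).coeff j * (p : ℤ) ^ j := comp_C_mul_X_coeff

lemma zoom_eval (p : ℕ) (r : ℤ) (f : ℤ[X]) (y : ℤ) :
    (zoom p r f).eval y = f.eval (r + p * y) := by
  simp [zoom, taylor_eval, add_comm]

lemma derivative_zoom (p : ℕ) (r : ℤ) (f : ℤ[X]) :
    derivative (zoom p r f) = C (p : ℤ) * zoom p r (derivative f) := by
  have h : derivative (taylor r f) = taylor r (derivative f) := by
    simp [taylor_apply, derivative_comp]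
  rw [zoom, derivative_comp, h]
  simp [zoom]

/-- The polynomial `f (r + p X) - f r` is `p ^ σ` times an admissible polynomial, where
`1 ≤ σ ≤ k`. The upper bound holds because its coefficient of degree `j` is `p ^ j` times that of
`f (r + X)`, and one of the latter with `1 ≤ j ≤ k` is prime to `p`. -/
lemma exists_zoom_eq {p k : ℕ} (hp : p.Prime) {f : ℤ[X]} (hf : Admissible p f)
    (hk : f.natDegree ≤ k) (r : ℤ) :
    ∃ (σ : ℕ) (g : ℤ[X]), zoom p r f = C (f.eval r) + C ((p : ℤ) ^ σ) * g ∧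
      Admissible p g ∧ g.natDegree ≤ k ∧ 1 ≤ σ ∧ σ ≤ k := by
  have hpi := Nat.prime_iff_prime_int.1 hp
  have hp0 : (p : ℤ) ≠ 0 := hpi.ne_zero
  obtain ⟨j, hj, hdv⟩ := hf.taylor r
  have hcj : (taylor r f).coeff j ≠ 0 := by
    intro h0
    simp [h0] at hdv
  have hjk : j ≤ k := by
    refine (le_natDegree_of_ne_zero hcj).trans ?_
    rwa [natDegree_taylor]
  have hcoef : ∀ i, 1 ≤ i →
      (zoom p r f - C (f.eval r)).coeff i = (taylor r f).coeff i * (p : ℤ) ^ i := by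
    intro i hi
    rw [coeff_sub, zoom_coeff, coeff_C_of_ne_zero (by omega), sub_zero]
  have hcoef0 : (zoom p r f - C (f.eval r)).coeff 0 = 0 := by
    rw [coeff_sub, zoom_coeff]
    simp
  have hne : zoom p r f - C (f.eval r) ≠ 0 := by
    intro h0
    have := hcoef j hj
    rw [h0, coeff_zero] at this
    exact mul_ne_zero hcj (pow_ne_zero _ hp0) this.symm
  obtain ⟨σ, g, hg, hg0⟩ := exists_eq_C_pow_mul hp hne
  have hgc : ∀ i, 1 ≤ i → (p : ℤ) ^ σ * g.coeff i = (taylor r f).coeff i * (p : ℤ) ^ i := by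
    intro i hi
    rw [← hcoef i hi, hg, coeff_C_mul]
  have hadm : Admissible p g := by
    by_contra hc
    simp only [Admissible, not_exists, not_and, not_not] at hc
    apply hg0
    ext i
    rcases Nat.eq_zero_or_pos i with rfl | hi
    · rw [coeff_zero, coeff_map_zmod_eq_zero_iff]
      rw [hg, coeff_C_mul] at hcoef0
      rw [(mul_eq_zero.1 hcoef0).resolve_left (pow_ne_zero _ hp0)]
      exact dvd_zero _
    · rw [coeff_map_zmod_eq_zero_iff _ _ _ |>.2 (hc i hi), coeff_zero]
  refine ⟨σ, g, by rw [← hg]; ring, hadm, ?_, ?_, ?_⟩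
  · rw [natDegree_le_iff_coeff_eq_zero]
    intro i hi
    have h1 := hgc i (by omega)
    rw [coeff_eq_zero_of_natDegree_lt (p := taylor r f) (by rw [natDegree_taylor]; omega),
      zero_mul] at h1
    exact (mul_eq_zero.1 h1).resolve_left (pow_ne_zero _ hp0)
  · by_contra hσ
    obtain ⟨i, hi, hdi⟩ := hadm
    have h1 := hgc i hi
    rw [show σ = 0 by omega, pow_zero, one_mul] at h1
    apply hdi
    rw [h1]
    exact (dvd_pow_self _ (by omega)).mul_left _
  · have h1 := hgc j hj
    have h2 : (p : ℤ) ^ σ ∣ (p : ℤ) ^ j :=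
      hpi.pow_dvd_of_dvd_mul_left σ hdv ⟨g.coeff j, by rw [h1]⟩
    exact ((pow_dvd_pow_iff hp0 hpi.not_isUnit).1 h2).trans hjk

/-- Zooming in at `r` cuts the degree down to the multiplicity of `r`: if `h₂` is `h (r + p X)` up
to powers of `p`, the degree of `h₂` modulo `p` is at most the multiplicity `m` of the root `r` of
`h` modulo `p`. Indeed the coefficient of degree `m` of `h (r + X)` is a `p`-adic unit, so the
coefficients of `h (r + p X)` of degree above `m` are divisible by a higher power of `p` than the
one of degree `m`. -/
lemma natDegree_le_rootMultiplicity {p : ℕ} [Fact p.Prime] {A B : ℕ} {h h₂ : ℤ[X]} (r : ℤ)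
    (hh : h.map (Int.castRingHom (ZMod p)) ≠ 0)
    (heq : C ((p : ℤ) ^ A) * h₂ = C ((p : ℤ) ^ B) * zoom p r h) :
    (h₂.map (Int.castRingHom (ZMod p))).natDegree
      ≤ (h.map (Int.castRingHom (ZMod p))).rootMultiplicity (r : ZMod p) := by
  have hp : p.Prime := Fact.out
  have hpi := Nat.prime_iff_prime_int.1 hp
  have hp0 : (p : ℤ) ≠ 0 := hpi.ne_zero
  set m := (h.map (Int.castRingHom (ZMod p))).rootMultiplicity (r : ZMod p) with hm
  have hco : ∀ i, (p : ℤ) ^ A * h₂.coeff i = (p : ℤ) ^ (B + i) * (taylor r h).coeff i := by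
    intro i
    have := congrArg (fun g => g.coeff i) heq
    simp only [coeff_C_mul, zoom_coeff] at this
    rw [this]
    ring
  have hcm : ¬ (p : ℤ) ∣ (taylor r h).coeff m := by
    rw [← coeff_map_zmod_eq_zero_iff, map_taylor]
    rw [rootMultiplicity_eq_natTrailingDegree] at hm
    have h1 : taylor (r : ZMod p) (h.map (Int.castRingHom (ZMod p))) ≠ 0 := by
      rwa [Ne, taylor_eq_zero]
    have h2 := mt trailingCoeff_eq_zero.1 h1
    rw [hm]
    exact h2
  have hAB : A ≤ B + m := by
    have h2 : (p : ℤ) ^ A ∣ (p : ℤ) ^ (B + m) :=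
      hpi.pow_dvd_of_dvd_mul_right A hcm ⟨_, (hco m).symm⟩
    exact (pow_dvd_pow_iff hp0 hpi.not_isUnit).1 h2
  rw [natDegree_le_iff_coeff_eq_zero]
  intro i hi
  rw [coeff_map_zmod_eq_zero_iff]
  have h1 := hco i
  rw [show B + i = A + (B + i - A - 1 + 1) by omega, pow_add, mul_assoc] at h1
  rw [mul_left_cancel₀ (pow_ne_zero _ hp0) h1, pow_succ']
  exact (dvd_mul_right _ _).mul_right _

/-! ### Residue classes modulo a prime power -/

/-- The part of `expSum (p ^ l) f` coming from `x ≡ r` modulo `p`, for `l ≥ 1`. -/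
noncomputable def classSum (p l : ℕ) (r : ℤ) (f : ℤ[X]) : ℂ :=
  ∑ y ∈ range (p ^ (l - 1)), ee (p ^ l) (f.eval (r + p * y))

lemma expSum_eq_sum_classSum {p l : ℕ} (hl : 1 ≤ l) (f : ℤ[X]) :
    expSum (p ^ l) f = ∑ r ∈ range p, classSum p l r f := by
  have h1 : p ^ l = p * p ^ (l - 1) := by
    rw [← pow_succ']
    congr 1
    omega
  rw [expSum]
  conv_lhs => rw [show range (p ^ l) = range (p * p ^ (l - 1)) by rw [← h1]]
  rw [sum_range_mul p (p ^ (l - 1)) (fun x => ee (p ^ l) (f.eval x))]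
  simp [classSum]

lemma norm_classSum_le (p l : ℕ) (r : ℤ) (f : ℤ[X]) :
    ‖classSum p l r f‖ ≤ (p : ℝ) ^ (l - 1) := by
  refine (norm_sum_le _ _).trans ?_
  simp [norm_ee]

/-- The summand of `classSum` has period `p ^ (l - 1)`. -/
lemma periodic_classSum {p l : ℕ} (hp : p ≠ 0) (hl : 1 ≤ l) (r : ℤ) (f : ℤ[X]) :
    Function.Periodic (fun y : ℤ => ee (p ^ l) (f.eval (r + p * y))) ((p ^ (l - 1) : ℕ) : ℤ) := by
  intro y
  have h := periodic_ee (n := p ^ l) (pow_ne_zero _ hp) f (r + p * y)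
  simp only at h ⊢
  rw [← h]
  congr 2
  have : ((p ^ l : ℕ) : ℤ) = p * (p ^ (l - 1) : ℕ) := by
    rw [← Nat.cast_mul, ← pow_succ']
    congr 2
    omega
  rw [this]
  ring

/-- Only residue classes of roots of `h = p ^ (-t) f'` modulo `p` contribute: the translation
`x ↦ x + p ^ (l - t - 1)` preserves the class of `r` and multiplies every summand by the same
factor `e (h r / p)`. -/
lemma classSum_eq_zero {p l t : ℕ} (hp : p.Prime) (hl : 2 * t + 2 ≤ l) {f h : ℤ[X]}
    (hd : derivative f = C ((p : ℤ) ^ t) * h) (r : ℤ) (hr : ¬ (p : ℤ) ∣ h.eval r) :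
    classSum p l r f = 0 := by
  have hp0 : p ≠ 0 := hp.ne_zero
  have hshift : classSum p l r f = ee p (h.eval r) * classSum p l r f := by
    conv_lhs =>
      rw [classSum, ← sum_range_shift (pow_ne_zero _ hp0)
        (periodic_classSum hp0 (by omega) r f) ((p : ℤ) ^ (l - t - 2))]
    rw [classSum, mul_sum]
    refine sum_congr rfl fun y _ => ?_
    set x : ℤ := r + p * y with hx
    have h1 : r + (p : ℤ) * (y + (p : ℤ) ^ (l - t - 2)) = x + (p : ℤ) ^ (l - t - 1) := by
      rw [show l - t - 1 = (l - t - 2) + 1 by omega, pow_succ, hx]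
      ring
    rw [h1]
    -- second order Taylor expansion; the quadratic term vanishes modulo `p ^ l` as `l ≥ 2 t + 2`
    obtain ⟨c, hc⟩ := f.binomExpansion x ((p : ℤ) ^ (l - t - 1))
    have h2 : (derivative f).eval x = (p : ℤ) ^ t * h.eval x := by
      rw [hd]
      simp
    have h3 : ee p (h.eval r) = ee p (h.eval x) := by
      apply ee_congr hp0
      have := h.sub_dvd_eval_sub x r
      refine dvd_trans ?_ this
      exact ⟨y, by rw [hx]; ring⟩
    have h4 : ee p (h.eval x) = ee (p ^ l) ((p : ℤ) ^ (l - 1) * h.eval x) := by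
      have := ee_scale (c := p ^ (l - 1)) (pow_ne_zero _ hp0) p (h.eval x)
      rw [← this]
      push_cast
      rw [← pow_succ]
      congr 2
      omega
    rw [h3, h4, ← ee_add]
    apply ee_congr (pow_ne_zero _ hp0)
    rw [hc, h2]
    have h5 : (p : ℤ) ^ (l - 1) = (p : ℤ) ^ t * (p : ℤ) ^ (l - t - 1) := by
      rw [← pow_add]
      congr 1
      omega
    rw [h5, ← pow_mul]
    have h6 : ((p ^ l : ℕ) : ℤ) ∣ (p : ℤ) ^ ((l - t - 1) * 2) := by
      push_cast
      exact pow_dvd_pow _ (by omega)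
    have h7 : (p : ℤ) ^ t * (p : ℤ) ^ (l - t - 1) * h.eval x + f.eval x
        - (f.eval x + (p : ℤ) ^ t * h.eval x * (p : ℤ) ^ (l - t - 1)
          + c * (p : ℤ) ^ ((l - t - 1) * 2)) = -c * (p : ℤ) ^ ((l - t - 1) * 2) := by ring
    rw [h7]
    exact h6.mul_left _
  by_contra hne
  apply hr
  rw [← ee_eq_one_iff hp0]
  exact (mul_right_cancel₀ hne (by rw [one_mul]; exact hshift)).symm

lemma norm_classSum_eq {p l σ : ℕ} (hp : p.Prime) (hσ : 1 ≤ σ) (hσl : σ < l) {f g : ℤ[X]} (r : ℤ)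
    (hg : zoom p r f = C (f.eval r) + C ((p : ℤ) ^ σ) * g) :
    ‖classSum p l r f‖ = (p : ℝ) ^ (σ - 1) * ‖expSum (p ^ (l - σ)) g‖ := by
  have hp0 : p ≠ 0 := hp.ne_zero
  have h1 : ∀ y : ℤ, ee (p ^ l) (f.eval (r + p * y))
      = ee (p ^ l) (f.eval r) * ee (p ^ (l - σ)) (g.eval y) := by
    intro y
    rw [← ee_scale (c := p ^ σ) (pow_ne_zero _ hp0) (p ^ (l - σ)), ← pow_add, Nat.add_sub_of_le hσl.le, ← ee_add,
      ← zoom_eval, hg]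
    simp
  have h2 : p ^ (l - 1) = p ^ (l - σ) * p ^ (σ - 1) := by
    rw [← pow_add]
    congr 1
    omega
  rw [classSum, sum_congr rfl fun (y : ℕ) _ => h1 y, ← mul_sum, norm_mul, norm_ee, one_mul, h2,
    sum_range_mul_of_periodic _ _ (periodic_ee (pow_ne_zero _ hp0) g), norm_mul, expSum]
  simp

/-! ### Prime power moduli -/

/-- Mordell's bound for all primes; for `p ≤ k` it is weaker than the trivial bound. -/
lemma norm_expSum_prime_le {p k : ℕ} (hp : p.Prime) (hk : 1 ≤ k) {f : ℤ[X]}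
    (hf : Admissible p f) (hd : f.natDegree ≤ k) :
    ‖expSum p f‖ ≤ (2 * k * k.factorial) * (p : ℝ) ^ (1 - 1 / (k : ℝ)) := by
  have : Fact p.Prime := ⟨hp⟩
  have hp1 : (1 : ℝ) ≤ p := by exact_mod_cast hp.one_le
  have hk1 : (1 : ℝ) ≤ k := by exact_mod_cast hk
  have hfac : (1 : ℝ) ≤ k.factorial := by exact_mod_cast k.factorial_pos
  have hD : (k : ℝ) ≤ 2 * k * k.factorial := by nlinarith
  rcases le_or_gt p k with hpk | hpk
  · have hpk' : (p : ℝ) ≤ k := by exact_mod_cast hpk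
    calc ‖expSum p f‖ ≤ p := norm_expSum_le p f
      _ = (p : ℝ) ^ (1 / (k : ℝ)) * (p : ℝ) ^ (1 - 1 / (k : ℝ)) := by
          rw [← Real.rpow_add (by positivity)]
          simp
      _ ≤ (p : ℝ) ^ (1 : ℝ) * (p : ℝ) ^ (1 - 1 / (k : ℝ)) := by
          gcongr
          rw [div_le_one (by positivity)]
          exact hk1
      _ ≤ _ := by
          rw [Real.rpow_one]
          gcongr
          exact hpk'.trans hD
  · have hS : expSum p f
        = ∑ x : ZMod p, (ZMod.stdAddChar ((f.map (Int.castRingHom (ZMod p))).eval x) : ℂ) := by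
      rw [expSum, sum_range_eq_sum_zmod (F := fun x => ee p (f.eval x))]
      refine sum_congr rfl fun z _ => ?_
      have h1 : (f.map (Int.castRingHom (ZMod p))).eval z
          = ((f.eval (z.val : ℤ) : ℤ) : ZMod p) := by
        have h2 := eval_intCast_map (Int.castRingHom (ZMod p)) f (z.val : ℤ)
        simpa using h2
      rw [ee_eq_stdAddChar, h1]
    have hdeg : 1 ≤ (f.map (Int.castRingHom (ZMod p))).natDegree := by
      obtain ⟨j, hj, hdv⟩ := hf
      rw [← coeff_map_zmod_eq_zero_iff] at hdv
      exact hj.trans (le_natDegree_of_ne_zero hdv)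
    have hmain := norm_polySum_pow_le hpk _ (natDegree_map_le.trans hd) hdeg
    rw [← hS] at hmain
    refine le_of_pow_le_pow_left₀ (n := 2 * k) (by omega) (by positivity) ?_
    rw [mul_pow]
    have h3 : ((p : ℝ) ^ (1 - 1 / (k : ℝ))) ^ (2 * k) = (p : ℝ) ^ (2 * k - 2) := by
      rw [← Real.rpow_natCast, ← Real.rpow_mul (by positivity), ← Real.rpow_natCast]
      congr 1
      push_cast [show 2 ≤ 2 * k by omega]
      field_simp
    rw [h3]
    refine hmain.trans ?_
    gcongr
    exact le_self_pow₀ (by linarith) (by omega)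

/-- The bound for prime powers, with an explicit dependence on the degree of `h = p ^ (-t) f'`
modulo `p`. This dependence makes the induction on `l` close: the class of a root of
multiplicity `m` leads to a sum whose new `h` has degree at most `m` modulo `p`, and the
multiplicities of the roots add up to at most the old degree. -/
lemma norm_expSum_prime_pow_le_aux {p k : ℕ} (hp : p.Prime) (hk : 1 ≤ k) (l : ℕ) :
    ∀ (f h : ℤ[X]) (t : ℕ), Admissible p f → f.natDegree ≤ k →
      derivative f = C ((p : ℤ) ^ t) * h → h.map (Int.castRingHom (ZMod p)) ≠ 0 →
      ‖expSum (p ^ l) f‖ ≤ ((k : ℝ) ^ 3 + 2 * k * k.factorial)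
        * (max 1 (h.map (Int.castRingHom (ZMod p))).natDegree : ℕ)
        * (p : ℝ) ^ ((l : ℝ) * (1 - 1 / (k : ℝ))) := by
  have : Fact p.Prime := ⟨hp⟩
  have hp1 : (1 : ℝ) ≤ p := by exact_mod_cast hp.one_le
  have hp0 : (0 : ℝ) < p := by linarith
  have hk1 : (1 : ℝ) ≤ k := by exact_mod_cast hk
  have hfac : (1 : ℝ) ≤ k.factorial := by exact_mod_cast k.factorial_pos
  have hk' : 0 ≤ 1 - 1 / (k : ℝ) := by
    rw [sub_nonneg, div_le_one (by positivity)]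
    exact hk1
  set D : ℝ := (k : ℝ) ^ 3 + 2 * k * k.factorial with hD
  have hDk : (k : ℝ) ^ 3 ≤ D := by
    rw [hD]
    have : (0 : ℝ) ≤ 2 * k * k.factorial := by positivity
    linarith
  have hD1 : 1 ≤ D := (one_le_pow₀ hk1).trans hDk
  induction l using Nat.strong_induction_on with
  | _ l ih =>
    intro f h t hf hdeg hder hh
    set H := h.map (Int.castRingHom (ZMod p)) with hH
    have hmax : (1 : ℝ) ≤ (max 1 H.natDegree : ℕ) := by exact_mod_cast le_max_left _ _
    have hpow : 1 ≤ (p : ℝ) ^ ((l : ℝ) * (1 - 1 / (k : ℝ))) :=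
      Real.one_le_rpow hp1 (by positivity)
    rcases Nat.eq_zero_or_pos l with rfl | hl
    · calc ‖expSum (p ^ 0) f‖ ≤ ((p ^ 0 : ℕ) : ℝ) := norm_expSum_le _ _
        _ = 1 * 1 * 1 := by simp
        _ ≤ _ := by gcongr
    rcases lt_or_ge l (2 * t + 2) with hlt | hlt
    · rcases Nat.eq_zero_or_pos t with rfl | ht
      · obtain rfl : l = 1 := by omega
        calc ‖expSum (p ^ 1) f‖ ≤ (2 * k * k.factorial) * (p : ℝ) ^ (1 - 1 / (k : ℝ)) := by
              rw [pow_one]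
              exact norm_expSum_prime_le hp hk hf hdeg
          _ ≤ D * 1 * (p : ℝ) ^ (((1 : ℕ) : ℝ) * (1 - 1 / (k : ℝ))) := by
              rw [Nat.cast_one, one_mul, mul_one]
              gcongr
              rw [hD]
              have : (0 : ℝ) ≤ (k : ℝ) ^ 3 := by positivity
              linarith
          _ ≤ _ := by gcongr
      -- here `p ^ t ≤ k` and `l ≤ 3 t`, so the trivial bound suffices
      · have hptk : ((p ^ t : ℕ) : ℝ) ≤ k := by exact_mod_cast hf.pow_le hp hdeg hder
        calc ‖expSum (p ^ l) f‖ ≤ ((p ^ l : ℕ) : ℝ) := norm_expSum_le _ _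
          _ ≤ ((p ^ t : ℕ) : ℝ) ^ 3 := by
              push_cast
              rw [← pow_mul]
              exact pow_le_pow_right₀ hp1 (by omega)
          _ ≤ (k : ℝ) ^ 3 := by gcongr
          _ ≤ D := hDk
          _ = D * 1 * 1 := by ring
          _ ≤ _ := by gcongr
    have hclass : ∀ r : ℕ, ‖classSum p l r f‖
        ≤ D * (H.rootMultiplicity (r : ZMod p) : ℕ)
          * (p : ℝ) ^ ((l : ℝ) * (1 - 1 / (k : ℝ))) := by
      intro r
      by_cases hr : (p : ℤ) ∣ h.eval (r : ℤ)
      swap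
      · rw [classSum_eq_zero hp hlt hder r hr, norm_zero]
        positivity
      have hroot : H.IsRoot (r : ZMod p) := by
        have h2 := eval_intCast_map (Int.castRingHom (ZMod p)) h (r : ℤ)
        rw [IsRoot, hH]
        rw [← ZMod.intCast_zmod_eq_zero_iff_dvd] at hr
        simp only [Int.cast_natCast, eq_intCast] at h2
        rw [h2, hr]
      have hmult : 1 ≤ H.rootMultiplicity (r : ZMod p) := (rootMultiplicity_pos hh).2 hroot
      obtain ⟨σ, g, hg, hgadm, hgdeg, hσ1, hσk⟩ := exists_zoom_eq hp hf hdeg (r : ℤ)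
      rcases le_or_gt l σ with hlσ | hlσ
      · calc ‖classSum p l r f‖ ≤ (p : ℝ) ^ (l - 1) := norm_classSum_le _ _ _ _
          _ = (p : ℝ) ^ ((l : ℝ) - 1) := by
              rw [← Real.rpow_natCast]
              push_cast [show 1 ≤ l by omega]
              rfl
          _ ≤ (p : ℝ) ^ ((l : ℝ) * (1 - 1 / (k : ℝ))) := by
              apply Real.rpow_le_rpow_of_exponent_le hp1
              have : (l : ℝ) / k ≤ 1 := by
                rw [div_le_one (by positivity)]
                exact_mod_cast hlσ.trans hσk
              have h3 : (l : ℝ) * (1 - 1 / (k : ℝ)) = l - l / k := by ring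
              linarith
          _ = 1 * (1 : ℕ) * (p : ℝ) ^ ((l : ℝ) * (1 - 1 / (k : ℝ))) := by simp
          _ ≤ _ := by gcongr
      · obtain ⟨τ, h₂, hder₂, hh₂⟩ := exists_eq_C_pow_mul hp hgadm.derivative_ne_zero
        have hrel : C ((p : ℤ) ^ (σ + τ)) * h₂ = C ((p : ℤ) ^ (t + 1)) * zoom p r h := by
          have h4 := congrArg derivative hg
          rw [derivative_zoom, hder, derivative_add, derivative_C, derivative_C_mul, hder₂,
            zero_add] at h4
          have h5 : zoom p r (C ((p : ℤ) ^ t) * h) = C ((p : ℤ) ^ t) * zoom p r h := by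
            rw [zoom, zoom, taylor_mul, taylor_C, mul_comp, C_comp]
          rw [h5] at h4
          rw [pow_add, C_mul, mul_assoc, ← h4, pow_succ', C_mul, mul_assoc]
        have hdeg₂ := natDegree_le_rootMultiplicity (r : ℤ) hh hrel
        rw [← hH, Int.cast_natCast] at hdeg₂
        have hih := ih (l - σ) (by omega) g h₂ τ hgadm hgdeg hder₂ hh₂
        have hσ' : (σ : ℝ) / k ≤ 1 := by
          rw [div_le_one (by positivity)]
          exact_mod_cast hσk
        rw [norm_classSum_eq hp hσ1 hlσ r hg]
        calc (p : ℝ) ^ (σ - 1) * ‖expSum (p ^ (l - σ)) g‖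
            ≤ (p : ℝ) ^ (σ - 1) * (D * (H.rootMultiplicity (r : ZMod p) : ℕ)
              * (p : ℝ) ^ (((l - σ : ℕ) : ℝ) * (1 - 1 / (k : ℝ)))) := by
              gcongr
              refine hih.trans ?_
              gcongr
              exact max_le hmult hdeg₂
          _ = D * (H.rootMultiplicity (r : ZMod p) : ℕ)
              * ((p : ℝ) ^ ((σ : ℝ) - 1)
                * (p : ℝ) ^ (((l : ℝ) - σ) * (1 - 1 / (k : ℝ)))) := by
              rw [← Real.rpow_natCast (p : ℝ) (σ - 1), Nat.cast_sub hlσ.le, Nat.cast_sub hσ1]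
              push_cast
              ring
          _ ≤ _ := by
              rw [← Real.rpow_add hp0]
              gcongr
              have h6 : (σ : ℝ) - 1 + ((l : ℝ) - σ) * (1 - 1 / (k : ℝ))
                  = l * (1 - 1 / (k : ℝ)) + (σ / k - 1) := by ring
              linarith
    have hsum : ∑ r ∈ range p, H.rootMultiplicity (r : ZMod p) ≤ H.natDegree := by
      have h7 : ∑ r ∈ range p, H.rootMultiplicity (r : ZMod p)
          = ∑ z : ZMod p, H.roots.count z := by
        simp_rw [count_roots]
        refine sum_bij' (fun x _ => (x : ZMod p)) (fun z _ => z.val) ?_ ?_ ?_ ?_ ?_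
        · simp
        · intro z _
          simpa using ZMod.val_lt z
        · intro x hx
          exact ZMod.val_cast_of_lt (by simpa using hx)
        · simp
        · simp
      rw [h7, Multiset.sum_count_eq_card (by simp)]
      exact H.card_roots'
    calc ‖expSum (p ^ l) f‖ ≤ ∑ r ∈ range p, ‖classSum p l r f‖ := by
          rw [expSum_eq_sum_classSum hl]
          exact norm_sum_le _ _
      _ ≤ ∑ r ∈ range p, D * (H.rootMultiplicity (r : ZMod p) : ℕ)
          * (p : ℝ) ^ ((l : ℝ) * (1 - 1 / (k : ℝ))) := sum_le_sum fun r _ => hclass r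
      _ = D * ((∑ r ∈ range p, H.rootMultiplicity (r : ZMod p) : ℕ) : ℝ)
          * (p : ℝ) ^ ((l : ℝ) * (1 - 1 / (k : ℝ))) := by
          rw [← sum_mul, ← mul_sum, Nat.cast_sum]
      _ ≤ _ := by
          gcongr
          exact hsum.trans (le_max_right _ _)

lemma exists_norm_expSum_prime_pow_le {k : ℕ} (hk : 1 ≤ k) :
    ∃ D : ℝ, 1 ≤ D ∧ ∀ (p l : ℕ) (f : ℤ[X]), p.Prime → Admissible p f → f.natDegree ≤ k →
      ‖expSum (p ^ l) f‖ ≤ D * ((p ^ l : ℕ) : ℝ) ^ (1 - 1 / (k : ℝ)) := by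
  have hk1 : (1 : ℝ) ≤ k := by exact_mod_cast hk
  refine ⟨((k : ℝ) ^ 3 + 2 * k * k.factorial) * k, ?_, ?_⟩
  · have h1 : (1 : ℝ) ≤ (k : ℝ) ^ 3 := one_le_pow₀ hk1
    have h2 : (0 : ℝ) ≤ 2 * k * k.factorial := by positivity
    nlinarith
  intro p l f hp hf hdeg
  obtain ⟨t, h, hder, hh⟩ := exists_eq_C_pow_mul hp hf.derivative_ne_zero
  have hhdeg : h.natDegree ≤ k := by
    have h1 : h.natDegree = (derivative f).natDegree := by
      rw [hder, natDegree_C_mul (pow_ne_zero _ (by exact_mod_cast hp.ne_zero))]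
    rw [h1]
    exact (natDegree_derivative_le f).trans (by omega)
  refine (norm_expSum_prime_pow_le_aux hp hk l f h t hf hdeg hder hh).trans ?_
  rw [Nat.cast_pow, ← Real.rpow_natCast (p : ℝ) l, ← Real.rpow_mul (by positivity)]
  gcongr
  exact max_le hk (natDegree_map_le.trans hhdeg)

/-! ### General moduli -/

/-- Twisted multiplicativity, from `1 / (m n) = u / m + v / n` and the Chinese remainder theorem. -/
lemma exists_expSum_mul {m n : ℕ} (hm : m ≠ 0) (hn : n ≠ 0) (h : m.Coprime n) (f : ℤ[X]) :
    ∃ u v : ℤ, IsCoprime u m ∧ IsCoprime v n ∧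
      expSum (m * n) f = expSum m (C u * f) * expSum n (C v * f) := by
  obtain ⟨v, u, huv⟩ := (Nat.isCoprime_iff_coprime.2 h)
  refine ⟨u, v, ⟨n, v, by linarith⟩, ⟨m, u, by linarith⟩, ?_⟩
  have hsplit : ∀ x : ℤ, ee (m * n) (f.eval x)
      = ee m ((C u * f).eval x) * ee n ((C v * f).eval x) := by
    intro x
    rw [← ee_scale hn m, ← ee_scale hm n, mul_comm n m, ← ee_add]
    congr 1
    simp only [eval_mul, eval_C]
    linear_combination (-(f.eval x)) * huv
  rw [expSum, sum_congr rfl fun (x : ℕ) _ => hsplit x]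
  exact sum_range_coprime hm hn h (periodic_ee hm _) (periodic_ee hn _)

lemma Admissible.C_mul {p n : ℕ} (hp : p.Prime) (hpn : p ∣ n) {u : ℤ} (hu : IsCoprime u n)
    {f : ℤ[X]} (hf : Admissible p f) : Admissible p (C u * f) := by
  obtain ⟨j, hj, hd⟩ := hf
  refine ⟨j, hj, fun hdv => ?_⟩
  rw [coeff_C_mul] at hdv
  have hpi := Nat.prime_iff_prime_int.1 hp
  rcases hpi.dvd_or_dvd hdv with h1 | h1
  · exact hpi.not_isUnit (hu.isUnit_of_dvd' h1 (by exact_mod_cast hpn))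
  · exact hd h1

lemma norm_expSum_le_pow_card {k : ℕ} {D : ℝ} (hD : 1 ≤ D)
    (hpp : ∀ (p l : ℕ) (f : ℤ[X]), p.Prime → Admissible p f → f.natDegree ≤ k →
      ‖expSum (p ^ l) f‖ ≤ D * ((p ^ l : ℕ) : ℝ) ^ (1 - 1 / (k : ℝ))) (n : ℕ) (hn : n ≠ 0) :
    ∀ f : ℤ[X], f.natDegree ≤ k → (∀ p, p.Prime → p ∣ n → Admissible p f) →
      ‖expSum n f‖ ≤ D ^ #n.primeFactors * (n : ℝ) ^ (1 - 1 / (k : ℝ)) := by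
  induction n using Nat.recOnPosPrimePosCoprime with
  | prime_pow p l hp hl =>
    intro f hdeg hadm
    rw [Nat.primeFactors_prime_pow hl.ne' hp, card_singleton, pow_one]
    exact hpp p l f hp (hadm p hp (dvd_pow_self _ hl.ne')) hdeg
  | zero => exact absurd rfl hn
  | one =>
    intro f _ _
    simpa using norm_expSum_le 1 f
  | coprime a b ha hb hab iha ihb =>
    intro f hdeg hadm
    obtain ⟨u, v, hu, hv, heq⟩ := exists_expSum_mul (by omega) (by omega) hab f
    have h1 := iha (by omega) (C u * f) ((natDegree_C_mul_le _ _).trans hdeg)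
      fun p hp hpa => (hadm p hp (hpa.mul_right _)).C_mul hp hpa hu
    have h2 := ihb (by omega) (C v * f) ((natDegree_C_mul_le _ _).trans hdeg)
      fun p hp hpb => (hadm p hp (hpb.mul_left _)).C_mul hp hpb hv
    rw [heq, norm_mul, hab.primeFactors_mul, card_union_of_disjoint hab.disjoint_primeFactors,
      pow_add, Nat.cast_mul, Real.mul_rpow (by positivity) (by positivity)]
    calc _ ≤ (D ^ #a.primeFactors * (a : ℝ) ^ (1 - 1 / (k : ℝ)))
          * (D ^ #b.primeFactors * (b : ℝ) ^ (1 - 1 / (k : ℝ))) := by gcongr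
      _ = _ := by ring

/-- A prime `p` with `p ^ ε ≥ D` costs nothing, and there are only boundedly many others. -/
lemma exists_pow_card_primeFactors_le {D ε : ℝ} (hD : 1 ≤ D) (hε : 0 < ε) :
    ∃ K : ℝ, 0 < K ∧ ∀ n : ℕ, n ≠ 0 → D ^ #n.primeFactors ≤ K * (n : ℝ) ^ ε := by
  obtain ⟨N, hN⟩ := exists_nat_ge (D ^ (1 / ε))
  have hbig : ∀ p : ℕ, N ≤ p → D ≤ (p : ℝ) ^ ε := by
    intro p hp
    calc D = (D ^ (1 / ε)) ^ ε := by
          rw [← Real.rpow_mul (by linarith), one_div_mul_cancel hε.ne', Real.rpow_one]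
      _ ≤ (p : ℝ) ^ ε := by
          gcongr
          exact hN.trans (by exact_mod_cast hp)
  refine ⟨D ^ N, by positivity, fun n hn => ?_⟩
  have hsplit : #n.primeFactors = #{p ∈ n.primeFactors | p < N} + #{p ∈ n.primeFactors | ¬ p < N} :=
    (card_filter_add_card_filter_not _).symm
  rw [hsplit, pow_add]
  have h1 : #{p ∈ n.primeFactors | p < N} ≤ N := by
    calc _ ≤ #(range N) := card_le_card fun p hp => by
          simpa using (mem_filter.1 hp).2
      _ = N := card_range N
  have h2 : D ^ #{p ∈ n.primeFactors | ¬ p < N} ≤ (n : ℝ) ^ ε := by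
    calc D ^ #{p ∈ n.primeFactors | ¬ p < N}
        = ∏ p ∈ n.primeFactors with ¬ p < N, D := by rw [prod_const]
      _ ≤ ∏ p ∈ n.primeFactors with ¬ p < N, (p : ℝ) ^ ε := by
          refine prod_le_prod (fun _ _ => by positivity) fun p hp => hbig p ?_
          exact not_lt.1 (mem_filter.1 hp).2
      _ = ((∏ p ∈ n.primeFactors with ¬ p < N, p : ℕ) : ℝ) ^ ε := by
          rw [Nat.cast_prod, Real.finsetProd_rpow _ _ (fun _ _ => by positivity)]
      _ ≤ (n : ℝ) ^ ε := by
          gcongr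
          refine Nat.le_of_dvd (Nat.pos_of_ne_zero hn) ?_
          exact (prod_dvd_prod_of_subset _ _ _ (filter_subset _ _)).trans
            (Nat.prod_primeFactors_dvd n)
  gcongr

/-- Hua's bound for complete exponential sums. -/
lemma exists_norm_expSum_le {k : ℕ} (hk : 1 ≤ k) {ε : ℝ} (hε : 0 < ε) :
    ∃ K : ℝ, 0 < K ∧ ∀ n : ℕ, n ≠ 0 → ∀ f : ℤ[X], f.natDegree ≤ k →
      (∀ p, p.Prime → p ∣ n → Admissible p f) →
      ‖expSum n f‖ ≤ K * (n : ℝ) ^ (1 - 1 / (k : ℝ) + ε) := by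
  obtain ⟨D, hD, hpp⟩ := exists_norm_expSum_prime_pow_le hk
  obtain ⟨K, hK, hKn⟩ := exists_pow_card_primeFactors_le hD hε
  refine ⟨K, hK, fun n hn f hdeg hadm => ?_⟩
  have hn' : (0 : ℝ) < n := by exact_mod_cast Nat.pos_of_ne_zero hn
  calc ‖expSum n f‖ ≤ D ^ #n.primeFactors * (n : ℝ) ^ (1 - 1 / (k : ℝ)) :=
        norm_expSum_le_pow_card hD hpp n hn f hdeg hadm
    _ ≤ K * (n : ℝ) ^ ε * (n : ℝ) ^ (1 - 1 / (k : ℝ)) := by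
        gcongr
        exact hKn n hn
    _ = _ := by
        rw [Real.rpow_add hn']
        ring

/-! ### The weighted sum -/

/-- The function `PkInt b` as a formal polynomial. -/
noncomputable def PkPoly {k : ℕ} (b : Fin k → ℤ) : ℤ[X] := ∑ i, C (b i) * X ^ (i.1 + 1)

lemma PkPoly_eval {k : ℕ} (b : Fin k → ℤ) (t : ℤ) : (PkPoly b).eval t = PkInt b t := by
  simp [PkPoly, PkInt, eval_finsetSum]

lemma PkPoly_coeff {k : ℕ} (b : Fin k → ℤ) (j : Fin k) : (PkPoly b).coeff (j.1 + 1) = b j := by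
  simp [PkPoly, coeff_X_pow, Fin.val_inj]

lemma natDegree_PkPoly_le {k : ℕ} (b : Fin k → ℤ) : (PkPoly b).natDegree ≤ k := by
  refine natDegree_sum_le_of_forall_le _ _ fun i _ => ?_
  exact (natDegree_C_mul_X_pow_le _ _).trans i.2

lemma sum_Icc_eq_expSum {k q : ℕ} (b : Fin k → ℤ) (hq : q ≠ 0) :
    ∑ r ∈ Icc (1 : ℤ) q, e ((PkInt b r : ℝ) / q) = expSum q (PkPoly b) := by
  rw [expSum, ← sum_range_shift hq (periodic_ee hq (PkPoly b)) 1]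
  refine sum_bij' (fun r _ => (r - 1).toNat) (fun x _ => (x : ℤ) + 1) ?_ ?_ ?_ ?_ ?_
  · intro r hr
    simp only [mem_Icc, mem_range] at hr ⊢
    omega
  · intro r hr
    simp only [mem_Icc, mem_range] at hr ⊢
    omega
  · intro r hr
    simp only [mem_Icc] at hr
    omega
  · intro r hr
    simp
  · intro r hr
    simp only [mem_Icc] at hr
    rw [PkPoly_eval, ee, Int.toNat_of_nonneg (by omega), sub_add_cancel]

lemma expSum_mul_scale {g n : ℕ} (hg : g ≠ 0) (hn : n ≠ 0) (f : ℤ[X]) :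
    expSum (n * g) (C (g : ℤ) * f) = g * expSum n f := by
  rw [expSum, expSum, ← sum_range_mul_of_periodic n g (periodic_ee hn f)]
  refine sum_congr rfl fun x _ => ?_
  rw [← ee_scale hg n, mul_comm n g]
  simp
end

theorem stmt7 (k : ℕ) (hk : 2 ≤ k) (ε : ℝ) (hε : 0 < ε) :
    ∃ C : ℝ, ∀ q : ℕ, 1 ≤ q → ∀ a w : Fin k → ℤ,
      Nat.gcd (Finset.univ.gcd fun i => (a i).natAbs) q = 1 →
      (∀ j, w j ≠ 0) →
      ‖∑ r ∈ Finset.Icc (1 : ℤ) q, e ((PkInt (fun i => a i * w i) r : ℝ) / q)‖ ≤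
        C * (∏ j, |(w j : ℝ)|) ^ (1 / (k : ℝ)) * (q : ℝ) ^ (1 - 1 / (k : ℝ) + ε) := by
  obtain ⟨K, hK, hHua⟩ := exists_norm_expSum_le (show 1 ≤ k by omega) hε
  refine ⟨K, fun q hq a w hgcd hw => ?_⟩
  rw [sum_Icc_eq_expSum _ (by omega)]
  set g : ℕ := Nat.gcd (univ.gcd fun i => (a i * w i).natAbs) q with hg
  have hgpos : 0 < g := Nat.gcd_pos_of_pos_right _ hq
  obtain ⟨n, hn⟩ : g ∣ q := Nat.gcd_dvd_right _ _
  have hn0 : n ≠ 0 := by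
    rintro rfl
    simp at hn
    omega
  have hgaw : ∀ i, (g : ℤ) ∣ a i * w i := fun i => by
    rw [Int.natCast_dvd]
    exact (Nat.gcd_dvd_left _ _).trans (gcd_dvd (mem_univ i))
  choose b hb using hgaw
  -- any common prime divisor of the `b i` and `n` would enlarge `g`
  have hadm : ∀ p, p.Prime → p ∣ n → Admissible p (PkPoly b) := by
    intro p hp hpn
    by_contra hc
    simp only [Admissible, not_exists, not_and, not_not] at hc
    have h1 : g * p ∣ g := by
      conv_rhs => rw [hg]
      refine Nat.dvd_gcd (dvd_gcd fun i _ => ?_) ?_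
      · rw [← Int.natCast_dvd, hb i]
        push_cast
        have := hc (i.1 + 1) (by omega)
        rw [PkPoly_coeff] at this
        exact mul_dvd_mul_left _ this
      · rw [hn]
        exact mul_dvd_mul_left _ hpn
    have h2 := Nat.le_of_dvd hgpos h1
    have h3 := hp.two_le
    nlinarith
  have hpoly : PkPoly (fun i => a i * w i) = Polynomial.C (g : ℤ) * PkPoly b := by
    simp only [PkPoly, mul_sum, hb, Polynomial.C_mul, mul_assoc]
  -- `g` divides `a i * ∏ w` for each `i`, and `q * ∏ w`, hence `∏ w`
  have hgw : g ∣ ∏ j, (w j).natAbs := by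
    have h1 : g ∣ Nat.gcd (univ.gcd fun i => (a i).natAbs) q * ∏ j, (w j).natAbs := by
      rw [← Nat.gcd_mul_right]
      refine Nat.dvd_gcd ?_ ((Nat.gcd_dvd_right _ _).mul_right _)
      rw [← normalize_eq (∏ j, (w j).natAbs), ← Finset.gcd_mul_right]
      refine dvd_gcd fun i _ => ?_
      have h2 : g ∣ (a i).natAbs * (w i).natAbs := by
        rw [← Int.natAbs_mul, ← Int.natCast_dvd]
        exact ⟨b i, hb i⟩
      exact h2.trans (mul_dvd_mul_left _ (dvd_prod_of_mem _ (mem_univ i)))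
    rwa [hgcd, one_mul] at h1
  have hgle : (g : ℝ) ≤ ∏ j, |(w j : ℝ)| := by
    have h1 : g ≤ ∏ j, (w j).natAbs :=
      Nat.le_of_dvd (prod_pos fun j _ => Int.natAbs_pos.2 (hw j)) hgw
    calc (g : ℝ) ≤ ((∏ j, (w j).natAbs : ℕ) : ℝ) := by exact_mod_cast h1
      _ = _ := by
          rw [Nat.cast_prod]
          refine prod_congr rfl fun j _ => ?_
          rw [Nat.cast_natAbs, Int.cast_abs]
  have hg1 : (1 : ℝ) ≤ g := by exact_mod_cast hgpos
  have hn' : (0 : ℝ) < n := by exact_mod_cast Nat.pos_of_ne_zero hn0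
  have hmain := hHua n hn0 (PkPoly b) (natDegree_PkPoly_le b) hadm
  rw [hpoly, show q = n * g by rw [hn, mul_comm], expSum_mul_scale hgpos.ne' hn0, norm_mul,
    Complex.norm_natCast]
  calc (g : ℝ) * ‖expSum n (PkPoly b)‖
      ≤ g * (K * (n : ℝ) ^ (1 - 1 / (k : ℝ) + ε)) := by gcongr
    _ = K * (g : ℝ) ^ (1 / (k : ℝ)) * ((n : ℝ) ^ (1 - 1 / (k : ℝ) + ε)
          * (g : ℝ) ^ (1 - 1 / (k : ℝ))) := by
        have : (g : ℝ) = (g : ℝ) ^ (1 / (k : ℝ)) * (g : ℝ) ^ (1 - 1 / (k : ℝ)) := by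
          rw [← Real.rpow_add (by positivity)]
          simp
        conv_lhs => rw [this]
        ring
    _ ≤ K * (∏ j, |(w j : ℝ)|) ^ (1 / (k : ℝ)) * ((n : ℝ) ^ (1 - 1 / (k : ℝ) + ε)
          * (g : ℝ) ^ (1 - 1 / (k : ℝ) + ε)) := by
        gcongr
        linarith
    _ = _ := by
        rw [Nat.cast_mul, Real.mul_rpow (by positivity) (by positivity)]
end
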